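/- arXiv:1908.00674 — 3 statements merged into one kernel-verified Lean document; each statement's English description precedes it below -/
import Mathlib

section
/- If a graph G has girth at least 8, then G is b-continuous; that is, for every integer k with χ(G) ≤ k ≤ b(G), G admits a b-coloring with k colors. -/
open SimpleGraph

variable {V : Type*}

/-- A proper coloring of `G` using exactly the colors `0, …, k-1`. -/
def IsProperKColoring (G : SimpleGraph V) (k : ℕ) (c : V → ℕ) : Prop :=
  (∀ v, c v < k) ∧ (∀ u v, G.Adj u v → c u ≠ c v) ∧ ∀ i < k, ∃ v, c v = i

/-- `u` is a b-vertex: it has a neighbor in every color class other than its own. -/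
def IsBVertex (G : SimpleGraph V) (k : ℕ) (c : V → ℕ) (u : V) : Prop :=
  ∀ j < k, j ≠ c u → ∃ w, G.Adj u w ∧ c w = j

/-- A b-coloring of `G` with `k` colors: a proper coloring using exactly `k` colors
in which every color class contains a b-vertex. -/
def IsBColoring (G : SimpleGraph V) (k : ℕ) (c : V → ℕ) : Prop :=
  IsProperKColoring G k c ∧ ∀ i < k, ∃ u, c u = i ∧ IsBVertex G k c u

/-- The b-chromatic number: the largest `k` for which `G` has a b-coloring with `k` colors. -/
noncomputable def bChrom [Fintype V] (G : SimpleGraph V) : ℕ :=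
  sSup {k | ∃ c : V → ℕ, IsBColoring G k c}

/-!
By induction it suffices to turn a b-coloring with `n + 2` colors into one with `n + 1` colors
whenever `G` is `n`-colorable. Declare one color, `none`, to be spare, ask only the other `n + 1`
colors to keep a weak b-vertex, and among these weak b-colorings take one whose spare class is
inclusion-minimal.

If the weak b-vertices of all the colors can be found around one spare vertex `u`, they form an
iris. Give `u` the color `n + 1`, and `n` of its petals and suitable children of these the colors
making `u` and the petals b-vertices; an `n`-coloring of the rest collides with this only at
vertices that, by the girth assumption, are independent, so they can all get the color `n + 1`.

Otherwise every spare vertex `u` has a remote color. Recoloring `u` with a remote color `j`, and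
its neighbors of color `j` with colors they miss, shrinks the spare class, so by minimality it
destroys all the weak b-vertices of some color `i`. The map `j ↦ i` permutes the remote colors,
hence weak b-vertices of remote colors lie at distance two from `u`. By the girth assumption they
have no spare neighbor, so each has two neighbors of the same color. Give the spare color to one
such neighbor for every remote color but one, `i₀`: the color `i₀` is left without b-vertices, its
class can be dissolved, and the remaining `n + 1` colors form a b-coloring.
-/

section Girth

variable {G H : SimpleGraph V}

theorem isAcyclic_of_encard_edgeSet_lt_egirth (hle : H ≤ G) (h : H.edgeSet.encard < G.egirth) :
    H.IsAcyclic := by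
  classical
  intro v p hp
  have hlength : (p.length : ℕ∞) = (p.edges.toFinset : Set (Sym2 V)).encard := by
    rw [Set.encard_coe_eq_coe_finsetCard, List.toFinset_card_of_nodup hp.edges_nodup,
      p.length_edges]
  have hsubset : (p.edges.toFinset : Set (Sym2 V)) ⊆ H.edgeSet := fun e he ↦
    p.edges_subset_edgeSet (List.mem_toFinset.mp he)
  have hgirth : G.egirth ≤ p.length := by
    simpa using egirth_le_length (hp.mapLe hle)
  exact h.not_ge (hgirth.trans (hlength.trans_le (Set.encard_le_encard hsubset)))

theorem encard_setOf_mem_list_le {α : Type*} (l : List α) : {a | a ∈ l}.encard ≤ l.length := by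
  classical
  rw [← List.coe_toFinset, Set.encard_coe_eq_coe_finsetCard]
  exact_mod_cast l.toFinset_card_le

theorem isAcyclic_fromEdgeSet_of_length_lt_egirth {l : List (Sym2 V)} (hl : ∀ e ∈ l, e ∈ G.edgeSet)
    (h : l.length < G.egirth) : (fromEdgeSet {e | e ∈ l}).IsAcyclic := by
  refine isAcyclic_of_encard_edgeSet_lt_egirth (G := G) ?_ (lt_of_le_of_lt ?_ h)
  · exact fun v w hvw ↦ hl _ ((fromEdgeSet_adj _).mp hvw).1
  · rw [edgeSet_fromEdgeSet]
    exact (Set.encard_le_encard Set.sdiff_subset).trans (encard_setOf_mem_list_le l)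

theorem mem_edgeSet_fromEdgeSet_of_mem {l : List (Sym2 V)} (hl : ∀ e ∈ l, e ∈ G.edgeSet)
    {e : Sym2 V} (he : e ∈ l) : e ∈ (fromEdgeSet {e | e ∈ l}).edgeSet := by
  rw [edgeSet_fromEdgeSet]
  exact ⟨he, G.not_isDiag_of_mem_edgeSet (hl e he)⟩

theorem eq_of_isPath_of_length_add_lt_egirth {u v : V} {p q : G.Walk u v} (hp : p.IsPath)
    (hq : q.IsPath) (h : p.length + q.length < G.egirth) : p = q := by
  have hedges : ∀ e ∈ p.edges ++ q.edges, e ∈ G.edgeSet := fun e he ↦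
    (List.mem_append.mp he).elim (p.edges_subset_edgeSet ·) (q.edges_subset_edgeSet ·)
  have hacyclic := isAcyclic_fromEdgeSet_of_length_lt_egirth hedges (by simpa using h)
  have hpH e (he : e ∈ p.edges) := mem_edgeSet_fromEdgeSet_of_mem hedges
    (List.mem_append_left _ he)
  have hqH e (he : e ∈ q.edges) := mem_edgeSet_fromEdgeSet_of_mem hedges
    (List.mem_append_right _ he)
  have := hacyclic.subsingleton_path u v
  have heq : (⟨_, hp.transfer hpH⟩ : Path _ u v) = ⟨_, hq.transfer hqH⟩ := Subsingleton.elim _ _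
  exact Walk.ext_support (by simpa using congrArg (fun r : Path _ u v ↦ r.1.support) heq)

theorem egirth_le_length_of_odd {v : V} (p : G.Walk v v) (hp : Odd p.length) :
    G.egirth ≤ p.length := by
  by_contra! h
  have hedges : ∀ e ∈ p.edges, e ∈ G.edgeSet := fun e ↦ (p.edges_subset_edgeSet ·)
  have hacyclic := isAcyclic_fromEdgeSet_of_length_lt_egirth hedges (by simpa using h)
  let q := p.transfer _ fun e he ↦ mem_edgeSet_fromEdgeSet_of_mem hedges he
  have hthree := q.three_le_chromaticNumber_of_odd_loop (by simpa [q] using hp)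
  have htwo := hacyclic.colorable_two.chromaticNumber_le
  exact absurd (hthree.trans htwo) (by decide)

theorem not_adj_of_length_eq {u v w : V} (p : G.Walk u v) (q : G.Walk u w)
    (hpq : p.length = q.length) (hg : ((p.length + q.length + 1 : ℕ) : ℕ∞) < G.egirth) :
    ¬ G.Adj v w := fun hvw ↦ by
  let r : G.Walk u u := (p.concat hvw).append q.reverse
  have hr : r.length = p.length + q.length + 1 := by
    simp only [r, Walk.length_append, Walk.length_concat, Walk.length_reverse]
    omega
  have hodd : Odd r.length := ⟨q.length, by omega⟩
  exact hg.not_ge (hr ▸ egirth_le_length_of_odd r hodd)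

theorem not_adj_of_four_le_egirth (hg : 4 ≤ G.egirth) {a b b' : V} (hab : G.Adj a b)
    (hab' : G.Adj a b') : ¬ G.Adj b b' :=
  not_adj_of_length_eq (.cons hab .nil) (.cons hab' .nil) rfl
    (lt_of_lt_of_le (by norm_num) hg)

theorem middle_eq_of_five_le_egirth (hg : 5 ≤ G.egirth) {a b c d : V} (hac : a ≠ c)
    (hab : G.Adj a b) (hbc : G.Adj b c) (had : G.Adj a d) (hdc : G.Adj d c) : b = d := by
  let p : G.Walk a c := .cons hab <| .cons hbc .nil
  let q : G.Walk a c := .cons had <| .cons hdc .nil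
  have hpq : p = q := eq_of_isPath_of_length_add_lt_egirth
    (by simp [p, hac, hab.ne, hbc.ne]) (by simp [q, hac, had.ne, hdc.ne])
    (lt_of_lt_of_le (by norm_num [p, q]) hg)
  simpa [p, q] using congrArg Walk.support hpq

theorem not_adj_of_six_le_egirth (hg : 6 ≤ G.egirth) {a b c b' c' : V} (hab : G.Adj a b)
    (hbc : G.Adj b c) (hab' : G.Adj a b') (hbc' : G.Adj b' c') : ¬ G.Adj c c' :=
  not_adj_of_length_eq (.cons hab <| .cons hbc .nil) (.cons hab' <| .cons hbc' .nil) rfl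
    (lt_of_lt_of_le (by norm_num) hg)

theorem middle_eq_of_seven_le_egirth (hg : 7 ≤ G.egirth) {a b c b' c' d : V} (hac : a ≠ c)
    (hac' : a ≠ c') (hbd : b ≠ d) (hbd' : b' ≠ d) (hab : G.Adj a b) (hbc : G.Adj b c)
    (hcd : G.Adj c d) (hab' : G.Adj a b') (hbc' : G.Adj b' c') (hcd' : G.Adj c' d) :
    b = b' ∧ c = c' := by
  have had : a ≠ d := by
    rintro rfl
    exact not_adj_of_four_le_egirth (le_trans (by decide) hg) hab hcd.symm hbc
  let p : G.Walk a d := .cons hab <| .cons hbc <| .cons hcd .nil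
  let q : G.Walk a d := .cons hab' <| .cons hbc' <| .cons hcd' .nil
  have hpq : p = q := eq_of_isPath_of_length_add_lt_egirth
    (by simp [p, *, hab.ne, hbc.ne, hcd.ne]) (by simp [q, *, hab'.ne, hbc'.ne, hcd'.ne])
    (lt_of_lt_of_le (by norm_num [p, q]) hg)
  simpa [p, q] using congrArg Walk.support hpq

theorem not_adj_of_eight_le_egirth (hg : 8 ≤ G.egirth) {a b c d b' c' d' : V} (hab : G.Adj a b)
    (hbc : G.Adj b c) (hcd : G.Adj c d) (hab' : G.Adj a b') (hbc' : G.Adj b' c')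
    (hcd' : G.Adj c' d') : ¬ G.Adj d d' :=
  not_adj_of_length_eq (.cons hab <| .cons hbc <| .cons hcd .nil)
    (.cons hab' <| .cons hbc' <| .cons hcd' .nil) rfl (lt_of_lt_of_le (by norm_num) hg)

end Girth

section BColorable

variable {α β : Type*} {G : SimpleGraph V}

/-- The vertex `v` sees the color `i` if some neighbor of `v` has color `i`. -/
def Sees (C : G.Coloring α) (v : V) (i : α) : Prop :=
  ∃ w, G.Adj v w ∧ C w = i

theorem sees_of_adj {C : G.Coloring α} {v w : V} (h : G.Adj v w) : Sees C v (C w) :=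
  ⟨w, h, rfl⟩

/-- `G` has a b-coloring with color set `α`: every color is carried by a vertex seeing all the
other colors. For `α = Fin k` this is `IsBColoring`, see `bColorable_fin_iff`. -/
def BColorable (G : SimpleGraph V) (α : Type*) : Prop :=
  ∃ C : G.Coloring α, ∀ i, ∃ v, C v = i ∧ ∀ j ≠ i, Sees C v j

theorem BColorable.congr (h : BColorable G α) (e : α ≃ β) : BColorable G β := by
  obtain ⟨C, hC⟩ := h
  refine ⟨G.recolorOfEquiv e C, fun i ↦ ?_⟩
  obtain ⟨v, hv, hsees⟩ := hC (e.symm i)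
  refine ⟨v, (congrArg e hv).trans (e.apply_symm_apply i), fun j hj ↦ ?_⟩
  obtain ⟨w, hvw, hw⟩ := hsees (e.symm j) (e.symm.injective.ne hj)
  exact ⟨w, hvw, (congrArg e hw).trans (e.apply_symm_apply j)⟩

theorem bColorable_fin_iff {k : ℕ} : BColorable G (Fin k) ↔ ∃ c, IsBColoring G k c := by
  constructor
  · rintro ⟨C, hC⟩
    have hclass (i : ℕ) (hi : i < k) : ∃ v, (C v : ℕ) = i ∧ IsBVertex G k (fun v ↦ C v) v := by
      obtain ⟨v, hv, hsees⟩ := hC ⟨i, hi⟩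
      refine ⟨v, congrArg Fin.val hv, fun j hj hji ↦ ?_⟩
      obtain ⟨w, hvw, hw⟩ := hsees ⟨j, hj⟩ (hv ▸ Fin.ne_of_val_ne hji)
      exact ⟨w, hvw, congrArg Fin.val hw⟩
    exact ⟨fun v ↦ C v, ⟨fun v ↦ (C v).isLt, fun u v huv ↦ Fin.val_ne_of_ne (C.valid huv),
      fun i hi ↦ (hclass i hi).imp fun _ ↦ And.left⟩, hclass⟩
  · rintro ⟨c, ⟨hlt, hproper, -⟩, hclass⟩
    refine ⟨Coloring.mk (fun v ↦ (⟨c v, hlt v⟩ : Fin k)) fun {u v} huv ↦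
      Fin.ne_of_val_ne (hproper u v huv), fun i ↦ ?_⟩
    obtain ⟨v, hv, hsees⟩ := hclass i i.isLt
    refine ⟨v, Fin.ext hv, fun j hji ↦ ?_⟩
    obtain ⟨w, hvw, hw⟩ := hsees j j.isLt (hv ▸ Fin.val_ne_of_ne hji)
    exact ⟨w, hvw, Fin.ext hw⟩

theorem exists_coloring_piecewise (C : G.Coloring α) (W : Set V) (g : V → α)
    (hg : ∀ x ∈ W, ∀ y ∈ W, G.Adj x y → g x ≠ g y)
    (hgC : ∀ x ∈ W, ∀ y ∉ W, G.Adj x y → g x ≠ C y) :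
    ∃ C' : G.Coloring α, (∀ v ∈ W, C' v = g v) ∧ ∀ v ∉ W, C' v = C v := by
  classical
  refine ⟨Coloring.mk (W.piecewise g C) fun {x y} hxy ↦ ?_,
    fun v ↦ W.piecewise_eq_of_mem g C, fun v ↦ W.piecewise_eq_of_notMem g C⟩
  by_cases hx : x ∈ W <;> by_cases hy : y ∈ W
  · simpa [hx, hy] using hg x hx y hy hxy
  · simpa [hx, hy] using hgC x hx y hy hxy
  · simpa [hx, hy] using (hgC y hy x hx hxy.symm).symm
  · simpa [hx, hy] using C.valid hxy

theorem exists_coloring_ne_of_not_sees (C : G.Coloring α) (i : α)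
    (hi : ∀ v, C v = i → ∃ j ≠ i, ¬ Sees C v j) :
    ∃ C' : G.Coloring {j // j ≠ i}, ∀ v, C v ≠ i → (C' v : α) = C v := by
  have : Nonempty α := ⟨i⟩
  choose! g hgi hgC using hi
  obtain ⟨C', hC'i, hC'⟩ := exists_coloring_piecewise C {v | C v = i} g
    (fun x hx y hy hxy ↦ absurd (hx.trans hy.symm) (C.valid hxy))
    (fun x hx y _ hxy heq ↦ hgC x hx (heq ▸ sees_of_adj hxy))
  have hne (v : V) : C' v ≠ i := by
    by_cases hv : C v = i
    · exact hC'i v hv ▸ hgi v hv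
    · exact hC' v hv ▸ hv
  exact ⟨Coloring.mk (fun v ↦ ⟨C' v, hne v⟩) fun {x y} hxy heq ↦
    C'.valid hxy (congrArg Subtype.val heq), hC'⟩

theorem bColorable_ne_of_not_sees (C : G.Coloring α) (i : α)
    (hi : ∀ v, C v = i → ∃ j ≠ i, ¬ Sees C v j)
    (hC : ∀ j ≠ i, ∃ v, C v = j ∧ ∀ l ≠ i, l ≠ j → Sees C v l) :
    BColorable G {j // j ≠ i} := by
  obtain ⟨C', hC'⟩ := exists_coloring_ne_of_not_sees C i hi
  have hagree {v : V} {j : {j // j ≠ i}} (hv : C v = j) : C' v = j :=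
    Subtype.ext ((hC' v (hv ▸ j.2)).trans hv)
  refine ⟨C', fun j ↦ ?_⟩
  obtain ⟨v, hv, hsees⟩ := hC j j.2
  refine ⟨v, hagree hv, fun l hlj ↦ ?_⟩
  obtain ⟨w, hvw, hw⟩ := hsees l l.2 (Subtype.coe_injective.ne hlj)
  exact ⟨w, hvw, hagree hw⟩

theorem bColorable_fin_of_chromaticNumber_eq {k : ℕ} (h : G.chromaticNumber = k) :
    BColorable G (Fin k) := by
  obtain ⟨C⟩ := chromaticNumber_le_iff_colorable.mp h.le
  by_contra hnot
  have hclass : ∃ i, ∀ v, C v = i → ∃ j ≠ i, ¬ Sees C v j := by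
    by_contra! hall
    exact hnot ⟨C, hall⟩
  obtain ⟨i, hi⟩ := hclass
  obtain ⟨C', -⟩ := exists_coloring_ne_of_not_sees C i hi
  have hlt : Fintype.card {j // j ≠ i} < k := by
    simpa using Nat.sub_lt i.pos one_pos
  exact (h ▸ C'.colorable.chromaticNumber_le).not_gt (by exact_mod_cast hlt)

end BColorable

section Iris

variable {α : Type*} {G : SimpleGraph V}

theorem exists_coloring_option_extending (f : G.Coloring α) (R : V → α → Prop)
    (hfun : ∀ x i j, R x i → R x j → i = j) (hproper : ∀ x y i, R x i → R y i → ¬ G.Adj x y)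
    (hfree : ∀ x x' y y' i i', (∀ j, ¬ R x j) → (∀ j, ¬ R x' j) → R y i → R y' i' →
      G.Adj x y → G.Adj x' y' → ¬ G.Adj x x') :
    ∃ C : G.Coloring (Option α), (∀ x i, R x i → C x = some i) ∧
      ∀ x y i, (∀ j, ¬ R x j) → G.Adj x y → R y i → C x = none := by
  have hcolor (x : V) : ∃ o : Option α, (∀ i, o = some i ↔ R x i) := by
    by_cases hx : ∃ i, R x i
    · obtain ⟨i, hi⟩ := hx
      exact ⟨some i, fun j ↦ ⟨fun h ↦ Option.some_injective _ h ▸ hi,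
        fun hj ↦ congrArg some (hfun x i j hi hj)⟩⟩
    · exact ⟨none, fun j ↦ ⟨nofun, fun hj ↦ absurd ⟨j, hj⟩ hx⟩⟩
  choose g hg using hcolor
  have hnone {x : V} : g x = none ↔ ∀ i, ¬ R x i := by
    simp only [← hg, Option.eq_none_iff_forall_ne_some]
  let W : Set V := {x | (∃ i, R x i) ∨ ∃ y i, G.Adj x y ∧ R y i}
  have hgW x (hx : x ∈ W) y (hy : y ∈ W) (hxy : G.Adj x y) : g x ≠ g y := fun heq ↦ by
    rcases hgx : g x with _ | i
    · have hgy := heq ▸ hgx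
      obtain ⟨x', i, hxx', hx'⟩ := hx.resolve_left (not_exists.mpr (hnone.mp hgx))
      obtain ⟨y', j, hyy', hy'⟩ := hy.resolve_left (not_exists.mpr (hnone.mp hgy))
      exact hfree x y x' y' i j (hnone.mp hgx) (hnone.mp hgy) hx' hy' hxx' hyy' hxy
    · exact hproper x y i ((hg x i).mp hgx) ((hg y i).mp (heq ▸ hgx)) hxy
  obtain ⟨C, hC, -⟩ := exists_coloring_piecewise (G.recolorOfEmbedding Function.Embedding.some f)
    W g hgW fun x _ y hy hxy heq ↦ hy (.inr ⟨x, f y, hxy.symm, (hg x _).mp heq⟩)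
  exact ⟨C, fun x i hx ↦ (hC x (.inl ⟨i, hx⟩)).trans ((hg x i).mpr hx),
    fun x y i hx hxy hy ↦ (hC x (.inr ⟨y, i, hxy, hy⟩)).trans (hnone.mpr hx)⟩

/-- An iris centred at `u`: neighbors `p i` of `u` (its petals), one for each color `i` and
pairwise distinct, each having at least as many neighbors as there are colors. -/
structure IsIris_s4 (G : SimpleGraph V) (u : V) (p : α → V) : Prop where
  injective : Function.Injective p
  adj i : G.Adj u (p i)
  card_le_degree i : ENat.card α ≤ (G.neighborSet (p i)).encard

/-- A choice of children for the petals of an iris: `t i j` is a neighbor of the petal `p i` meant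
to receive the color `j ≠ i`. The values `t i i` are irrelevant. -/
structure IsPetalChild (G : SimpleGraph V) (u : V) (p : α → V) (t : α → α → V) : Prop where
  injOn i : Set.InjOn (t i) {i}ᶜ
  adj i j : j ≠ i → G.Adj (p i) (t i j)
  ne_center i j : j ≠ i → t i j ≠ u

/-- The partial coloring of the petals and their children: `IrisColor p t x i` states that `x`
receives the color `i`. -/
def IrisColor (p : α → V) (t : α → α → V) (x : V) (i : α) : Prop :=
  x = p i ∨ ∃ j, i ≠ j ∧ x = t j i

variable {u : V} {p : α → V} {t : α → α → V}

theorem IsIris_s4.exists_isPetalChild [Finite α] (h : IsIris_s4 G u p) :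
    ∃ t, IsPetalChild G u p t := by
  have hchild (i : α) : ∃ s : α → V, Set.InjOn s {i}ᶜ ∧
      ∀ j ∈ ({i}ᶜ : Set α), s j ∈ G.neighborSet (p i) \ {u} := by
    have : Nonempty V := ⟨u⟩
    have hcard : ({i}ᶜ : Set α).encard ≤ (G.neighborSet (p i) \ {u}).encard := by
      rw [← ENat.add_le_add_iff_right ENat.one_ne_top,
        Set.encard_sdiff_singleton_add_one (show u ∈ G.neighborSet (p i) from (h.adj i).symm),
        Set.compl_eq_univ_sdiff, Set.encard_sdiff_singleton_add_one (Set.mem_univ i),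
        Set.encard_univ]
      exact h.card_le_degree i
    obtain ⟨s, hs, hinj⟩ := (Set.toFinite _).exists_injOn_of_encard_le hcard
    exact ⟨s, hinj, hs⟩
  choose t hinj ht using hchild
  exact ⟨t, hinj, fun i j hj ↦ (ht i j hj).1, fun i j hj ↦ (ht i j hj).2⟩

theorem IrisColor.petal (i : α) : IrisColor p t (p i) i :=
  .inl rfl

theorem IrisColor.child {i j : α} (h : j ≠ i) : IrisColor p t (t i j) j :=
  .inr ⟨i, h, rfl⟩

theorem IsIris_s4.not_irisColor_center (h : IsIris_s4 G u p) (ht : IsPetalChild G u p t) (i : α) :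
    ¬ IrisColor p t u i := by
  rintro (hu | ⟨j, hij, hu⟩)
  · exact (h.adj i).ne hu
  · exact ht.ne_center j i hij hu.symm

theorem IsIris_s4.irisColor_unique (hg : 5 ≤ G.egirth) (h : IsIris_s4 G u p)
    (ht : IsPetalChild G u p t) {x : V} {i j : α} (hi : IrisColor p t x i)
    (hj : IrisColor p t x j) : i = j := by
  have hpetal {i j l : α} (hjl : j ≠ l) : p i ≠ t l j := fun heq ↦
    not_adj_of_four_le_egirth (le_trans (by decide) hg) (h.adj l) (heq ▸ h.adj i)
      (ht.adj l j hjl)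
  rcases hi with rfl | ⟨k, hik, rfl⟩ <;> rcases hj with hj | ⟨l, hjl, hj⟩
  · exact h.injective hj
  · exact absurd hj (hpetal hjl)
  · exact absurd hj.symm (hpetal hik)
  · have hkl : k = l := h.injective <| middle_eq_of_five_le_egirth hg (ht.ne_center k i hik).symm
      (h.adj k) (ht.adj k i hik) (h.adj l) (hj ▸ ht.adj l j hjl)
    subst hkl
    exact ht.injOn k hik hjl hj

theorem IsIris_s4.not_adj_of_irisColor (hg : 6 ≤ G.egirth) (h : IsIris_s4 G u p)
    (ht : IsPetalChild G u p t) {x y : V} {i : α} (hx : IrisColor p t x i)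
    (hy : IrisColor p t y i) : ¬ G.Adj x y := by
  have hpetal {j : α} (hij : i ≠ j) : ¬ G.Adj (p i) (t j i) := fun hadj ↦
    hij <| h.injective <| middle_eq_of_five_le_egirth (le_trans (by decide) hg)
      (ht.ne_center j i hij).symm (h.adj i) hadj (h.adj j) (ht.adj j i hij)
  rcases hx with rfl | ⟨j, hij, rfl⟩ <;> rcases hy with rfl | ⟨l, hil, rfl⟩
  · exact G.irrefl
  · exact hpetal hil
  · exact fun hadj ↦ hpetal hij hadj.symm
  · exact not_adj_of_six_le_egirth hg (h.adj j) (ht.adj j i hij) (h.adj l) (ht.adj l i hil)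

theorem IsIris_s4.not_adj_of_not_irisColor (hg : 8 ≤ G.egirth) (h : IsIris_s4 G u p)
    (ht : IsPetalChild G u p t) {x x' y y' : V} {i i' : α} (hx : ∀ j, ¬ IrisColor p t x j)
    (hx' : ∀ j, ¬ IrisColor p t x' j) (hy : IrisColor p t y i) (hy' : IrisColor p t y' i')
    (hxy : G.Adj x y) (hxy' : G.Adj x' y') : ¬ G.Adj x x' := by
  have hpetal {j k l : α} (hkl : k ≠ l) {x x' : V} (hx : ∀ j, ¬ IrisColor p t x j)
      (hx' : ∀ j, ¬ IrisColor p t x' j) (hxp : G.Adj (p j) x) (hx't : G.Adj (t l k) x') :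
      ¬ G.Adj x x' := fun hxx' ↦ by
    have hplx' : p l ≠ x' := fun heq ↦ hx' l (.inl heq.symm)
    have hut : u ≠ t l k := (ht.ne_center l k hkl).symm
    by_cases hxu : x = u
    · subst hxu
      exact hplx' (middle_eq_of_five_le_egirth (le_trans (by decide) hg) hut (h.adj l)
        (ht.adj l k hkl) hxx' hx't.symm)
    · have hxt := (middle_eq_of_seven_le_egirth (le_trans (by decide) hg) (Ne.symm hxu) hut
        (fun heq ↦ hx' j (.inl heq.symm)) hplx' (h.adj j) hxp hxx' (h.adj l)
        (ht.adj l k hkl) hx't).2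
      exact hx k (hxt ▸ .child hkl)
  rcases hy with rfl | ⟨j, hij, rfl⟩ <;> rcases hy' with rfl | ⟨l, hil, rfl⟩
  · exact not_adj_of_six_le_egirth (le_trans (by decide) hg) (h.adj _) hxy.symm (h.adj _)
      hxy'.symm
  · exact hpetal hil hx hx' hxy.symm hxy'.symm
  · exact fun hadj ↦ hpetal hij hx' hx hxy'.symm hxy.symm hadj.symm
  · exact not_adj_of_eight_le_egirth hg (h.adj j) (ht.adj j i hij) hxy.symm (h.adj l)
      (ht.adj l i' hil) hxy'.symm

theorem IsIris_s4.bColorable [Finite α] (hg : 8 ≤ G.egirth) (f : G.Coloring α)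
    (h : IsIris_s4 G u p) : BColorable G (Option α) := by
  obtain ⟨t, ht⟩ := h.exists_isPetalChild
  obtain ⟨C, hC, hCnone⟩ := exists_coloring_option_extending f (IrisColor p t)
    (fun _ _ _ ↦ h.irisColor_unique (le_trans (by decide) hg) ht)
    (fun _ _ _ ↦ h.not_adj_of_irisColor (le_trans (by decide) hg) ht)
    (fun _ _ _ _ _ _ ↦ h.not_adj_of_not_irisColor hg ht)
  have hu : C u = none :=
    hCnone u _ (f u) (h.not_irisColor_center ht) (h.adj _) (.petal _)
  refine ⟨C, fun o ↦ ?_⟩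
  rcases o with _ | i
  · refine ⟨u, hu, fun o ho ↦ ?_⟩
    obtain ⟨j, rfl⟩ := Option.ne_none_iff_exists'.mp ho
    exact ⟨p j, h.adj j, hC _ j (.petal j)⟩
  · refine ⟨p i, hC _ i (.petal i), fun o ho ↦ ?_⟩
    rcases o with _ | j
    · exact ⟨u, (h.adj i).symm, hu⟩
    · have hji : j ≠ i := fun heq ↦ ho (congrArg some heq)
      exact ⟨t i j, ht.adj i j hji, hC _ j (.child hji)⟩

end Iris

section WeakBColoring

variable {β : Type*} {G : SimpleGraph V} {C C' : G.Coloring (Option β)} {u b : V} {i j : β}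

/-- In a coloring with the spare color `none`, a weak b-vertex of color `i` sees all the colors
different from `i` and from the spare one. Instead of seeing the spare color it only has to have
enough neighbors to see every color different from `i`. -/
structure IsWeakBVertex (C : G.Coloring (Option β)) (b : V) (i : β) : Prop where
  color_eq : C b = some i
  sees j : j ≠ i → Sees C b (some j)
  card_le_degree : ENat.card β ≤ (G.neighborSet b).encard

/-- A coloring with the spare color `none` is a weak b-coloring if every other color has a weak
b-vertex. -/
def IsWeakBColoring (C : G.Coloring (Option β)) : Prop :=
  ∀ i, ∃ b, IsWeakBVertex C b i

/-- A weak b-coloring is reduced if its spare color class is inclusion-minimal among the weak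
b-colorings with the same color set. -/
def IsReducedColoring (C : G.Coloring (Option β)) : Prop :=
  MinimalFor IsWeakBColoring (fun C' : G.Coloring (Option β) ↦ C'.colorClass none) C

/-- The color `i` is remote from `u` if no weak b-vertex of color `i` is adjacent to `u`. -/
def IsRemote (C : G.Coloring (Option β)) (u : V) (i : β) : Prop :=
  ∀ b, IsWeakBVertex C b i → ¬ G.Adj u b

/-- The color `i` depends on the color `j` at `u`: every weak b-vertex of color `i` has exactly one
neighbor of color `j`, and this neighbor is adjacent to `u`. Recoloring the neighbors of `u` of
color `j` would then destroy all the weak b-vertices of color `i`. -/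
def ColorDependsOn (C : G.Coloring (Option β)) (u : V) (i j : β) : Prop :=
  ∀ b, IsWeakBVertex C b i →
    ∃ w, G.Adj u w ∧ G.Adj w b ∧ C w = some j ∧ ∀ x, G.Adj b x → C x = some j → x = w

theorem encard_compl_singleton_option (o : Option β) :
    ({o}ᶜ : Set (Option β)).encard = ENat.card β := by
  classical
  exact ENat.card_congr (Equiv.optionSubtypeNe o).removeNone

theorem isWeakBVertex_of_forall_sees (hb : C b = some i) (h : ∀ o ≠ some i, Sees C b o) :
    IsWeakBVertex C b i where
  color_eq := hb
  sees j hj := h (some j) ((Option.some_injective β).ne hj)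
  card_le_degree := by
    have hsubset : ({some i}ᶜ : Set (Option β)) ⊆ C '' G.neighborSet b := fun o ho ↦ h o ho
    calc ENat.card β = ({some i}ᶜ : Set (Option β)).encard :=
          (encard_compl_singleton_option _).symm
      _ ≤ (C '' G.neighborSet b).encard := Set.encard_le_encard hsubset
      _ ≤ (G.neighborSet b).encard := Set.encard_image_le _ _

theorem IsWeakBVertex.ne_of_eq_none (hb : IsWeakBVertex C b i) (hu : C u = none) : u ≠ b := by
  rintro rfl
  simp [hb.color_eq] at hu

theorem isRemote_of_not_sees (h : ¬ Sees C u (some i)) : IsRemote C u i :=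
  fun b hb hub ↦ h ⟨b, hub, hb.color_eq⟩

theorem exists_isReducedColoring [Finite V] (h : ∃ C : G.Coloring (Option β), IsWeakBColoring C) :
    ∃ C : G.Coloring (Option β), IsReducedColoring C :=
  exists_minimalFor_of_wellFoundedLT _ _ h

theorem IsReducedColoring.isWeakBColoring (h : IsReducedColoring C) : IsWeakBColoring C :=
  h.prop

theorem IsReducedColoring.not_isWeakBColoring (h : IsReducedColoring C)
    (hle : ∀ v, C' v = none → C v = none) (hu : C u = none) (hu' : C' u ≠ none) :
    ¬ IsWeakBColoring C' :=
  fun hC' ↦ hu' (h.le_of_le hC' hle hu)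

theorem IsRemote.exists_recolor (hj : IsRemote C u j) (hu : C u = none) :
    ∃ C' : G.Coloring (Option β), C' u = some j ∧
      (∀ w, G.Adj u w → C w = some j → C' w ≠ none) ∧
      ∀ v, v ≠ u → ¬ (G.Adj u v ∧ C v = some j) → C' v = C v := by
  classical
  have hmissing (w : V) (hw : G.Adj u w ∧ C w = some j) :
      ∃ o : Option β, o ≠ none ∧ o ≠ some j ∧ ¬ Sees C w o := by
    by_contra! hsees
    refine hj w (isWeakBVertex_of_forall_sees hw.2 fun o ho ↦ ?_) hw.1
    by_cases hnone : o = none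
    · exact hnone ▸ ⟨u, hw.1.symm, hu⟩
    · exact hsees o hnone ho
  choose! g hgnone hgj hgsees using hmissing
  let W : Set V := {v | v = u ∨ G.Adj u v ∧ C v = some j}
  have hgu {w : V} (hw : G.Adj u w ∧ C w = some j) : Function.update g u (some j) w = g w :=
    Function.update_of_ne hw.1.ne' _ _
  have hproper x (hx : x ∈ W) y (hy : y ∈ W) (hxy : G.Adj x y) :
      Function.update g u (some j) x ≠ Function.update g u (some j) y := by
    rcases hx with rfl | hx <;> rcases hy with rfl | hy
    · exact absurd hxy G.irrefl
    · simpa [hgu hy] using (hgj y hy).symm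
    · simpa [hgu hx] using hgj x hx
    · exact absurd (hx.2.trans hy.2.symm) (C.valid hxy)
  obtain ⟨C', hC'W, hC'⟩ := exists_coloring_piecewise C W _ hproper fun x hx y hy hxy heq ↦ by
    rcases hx with rfl | hx
    · exact hy (.inr ⟨hxy, by simpa using heq.symm⟩)
    · exact hgsees x hx (hgu hx ▸ heq ▸ sees_of_adj hxy)
  refine ⟨C', by simpa using hC'W u (.inl rfl), fun w huw hw ↦ ?_, fun v hvu hv ↦
    hC' v (not_or.mpr ⟨hvu, hv⟩)⟩
  rw [hC'W w (.inr ⟨huw, hw⟩), hgu ⟨huw, hw⟩]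
  exact hgnone w ⟨huw, hw⟩

theorem IsWeakBVertex.of_recolor (hg : 5 ≤ G.egirth) (hu : C u = none) (hj : IsRemote C u j)
    (hC' : ∀ v, v ≠ u → ¬ (G.Adj u v ∧ C v = some j) → C' v = C v) (hb : IsWeakBVertex C b i)
    (hspare : ∀ w, G.Adj u w → G.Adj w b → C w = some j → ∃ x, G.Adj b x ∧ C x = some j ∧ x ≠ w) :
    IsWeakBVertex C' b i where
  color_eq := by
    rw [hC' b (hb.ne_of_eq_none hu).symm, hb.color_eq]
    rintro ⟨hub, hbj⟩
    obtain rfl : i = j := Option.some_injective _ (hb.color_eq.symm.trans hbj)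
    exact hj b hb hub
  sees l hl := by
    have hkept {x : V} (hbx : G.Adj b x) (hx : C x = some l) (hxN : ¬ (G.Adj u x ∧ C x = some j)) :
        Sees C' b (some l) :=
      ⟨x, hbx, (hC' x (fun hxu ↦ by simp [hxu, hu] at hx) hxN).trans hx⟩
    obtain ⟨x, hbx, hx⟩ := hb.sees l hl
    by_cases hxN : G.Adj u x ∧ C x = some j
    · obtain rfl : l = j := Option.some_injective _ (hx.symm.trans hxN.2)
      obtain ⟨x', hbx', hx', hne⟩ := hspare x hxN.1 hbx.symm hx
      exact hkept hbx' hx' fun hx'N ↦ hne <|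
        middle_eq_of_five_le_egirth hg (hb.ne_of_eq_none hu) hx'N.1 hbx'.symm hxN.1 hbx.symm
    · exact hkept hbx hx hxN
  card_le_degree := hb.card_le_degree

theorem IsReducedColoring.exists_colorDependsOn (hg : 5 ≤ G.egirth) (h : IsReducedColoring C)
    (hu : C u = none) (hj : IsRemote C u j) : ∃ i, ColorDependsOn C u i j := by
  obtain ⟨C', hC'u, hC'N, hC'⟩ := hj.exists_recolor hu
  by_contra! hindep
  have hle (v : V) (hv : C' v = none) : C v = none := by
    have hvu : v ≠ u := by
      rintro rfl
      simp [hC'u] at hv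
    exact hC' v hvu (fun hvN ↦ hC'N v hvN.1 hvN.2 hv) ▸ hv
  refine h.not_isWeakBColoring hle hu (hC'u ▸ Option.some_ne_none j) fun i ↦ ?_
  have hi := hindep i
  simp only [ColorDependsOn] at hi
  push Not at hi
  obtain ⟨b, hb, hspare⟩ := hi
  exact ⟨b, hb.of_recolor hg hu hj hC' hspare⟩

theorem IsReducedColoring.sees (hg : 5 ≤ G.egirth) (h : IsReducedColoring C) (hu : C u = none)
    (j : β) : Sees C u (some j) := by
  by_contra hj
  obtain ⟨i, hi⟩ := h.exists_colorDependsOn hg hu (isRemote_of_not_sees hj)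
  obtain ⟨b, hb⟩ := h.isWeakBColoring i
  obtain ⟨w, huw, -, hw, -⟩ := hi b hb
  exact hj ⟨w, huw, hw⟩

theorem ColorDependsOn.isRemote (hg : 4 ≤ G.egirth) (h : ColorDependsOn C u i j) :
    IsRemote C u i := by
  intro b hb hub
  obtain ⟨w, huw, hwb, -⟩ := h b hb
  exact not_adj_of_four_le_egirth hg huw hub hwb

theorem ColorDependsOn.unique (hg : 5 ≤ G.egirth) (hu : C u = none)
    (hb : IsWeakBVertex C b i) {j' : β} (h : ColorDependsOn C u i j)
    (h' : ColorDependsOn C u i j') : j = j' := by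
  obtain ⟨w, huw, hwb, hw, -⟩ := h b hb
  obtain ⟨w', huw', hwb', hw', -⟩ := h' b hb
  have hww' := middle_eq_of_five_le_egirth hg (hb.ne_of_eq_none hu) huw hwb huw' hwb'
  exact Option.some_injective _ (hw.symm.trans (hww' ▸ hw'))

theorem IsReducedColoring.exists_isRemote_colorDependsOn [Finite β] (hg : 5 ≤ G.egirth)
    (h : IsReducedColoring C) (hu : C u = none) (hi : IsRemote C u i) :
    ∃ j, IsRemote C u j ∧ ColorDependsOn C u i j := by
  -- Choosing for each remote `j` a color depending on it gives an injective self-map of the finite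
  -- set of remote colors, hence a surjective one.
  choose φ hφ using fun j : {j // IsRemote C u j} ↦ h.exists_colorDependsOn hg hu j.2
  let ψ (j : {j // IsRemote C u j}) : {j // IsRemote C u j} :=
    ⟨φ j, (hφ j).isRemote (le_trans (by decide) hg)⟩
  have hinj : Function.Injective ψ := fun j j' hjj' ↦ by
    obtain ⟨b, hb⟩ := h.isWeakBColoring (φ j)
    have hφjj' : φ j = φ j' := congrArg Subtype.val hjj'
    exact Subtype.ext ((hφ j).unique hg hu hb (hφjj' ▸ hφ j'))
  obtain ⟨j, hj⟩ := Finite.surjective_of_injective hinj ⟨i, hi⟩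
  have hφj : φ j = i := congrArg Subtype.val hj
  exact ⟨j, j.2, hφj ▸ hφ j⟩

end WeakBColoring

section Switchable

variable {β : Type*} {G : SimpleGraph V} {C : G.Coloring (Option β)} {u b z : V} {i : β}

/-- The neighbor `z` of `b` is redundant if `b` has another neighbor of the same color. -/
def IsRedundant (C : G.Coloring (Option β)) (b z : V) : Prop :=
  G.Adj b z ∧ ∃ z', G.Adj b z' ∧ z' ≠ z ∧ C z' = C z

/-- The vertex `z` is switchable for the color `i` remote from `u` if it is a redundant neighbor of
a weak b-vertex `b` of color `i`. Giving `z` the spare color turns `b` into a vertex that sees all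
the colors different from `i`. -/
structure IsSwitchable (C : G.Coloring (Option β)) (u : V) (i : β) (b z : V) : Prop where
  isRemote : IsRemote C u i
  isWeakBVertex : IsWeakBVertex C b i
  isRedundant : IsRedundant C b z

theorem IsReducedColoring.exists_link [Finite β] (hg : 5 ≤ G.egirth) (h : IsReducedColoring C)
    (hu : C u = none) (hi : IsRemote C u i) (hb : IsWeakBVertex C b i) :
    ∃ w, G.Adj u w ∧ G.Adj w b ∧ ∃ j, IsRemote C u j ∧ C w = some j ∧
      ∀ x, G.Adj b x → C x = some j → x = w := by
  obtain ⟨j, hj, hij⟩ := h.exists_isRemote_colorDependsOn hg hu hi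
  obtain ⟨w, huw, hwb, hw, hunique⟩ := hij b hb
  exact ⟨w, huw, hwb, j, hj, hw, hunique⟩

theorem IsReducedColoring.isRemote_of_isRemote [Finite β] (hg : 7 ≤ G.egirth)
    (h : IsReducedColoring C) (hu : C u = none) (hi : IsRemote C u i) (hb : IsWeakBVertex C b i)
    {y : V} (hy : C y = none) (hby : G.Adj b y) {j : β} (hj : IsRemote C y j) :
    IsRemote C u j := fun b' hb' hub' ↦ by
  have hg₅ : 5 ≤ G.egirth := le_trans (by decide) hg
  obtain ⟨w, huw, hwb, k, hk, hw, -⟩ := h.exists_link hg₅ hu hi hb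
  obtain ⟨v, hyv, hvb', -⟩ := h.exists_link hg₅ hy hj hb'
  have hyw : y ≠ w := by
    rintro rfl
    simp [hw] at hy
  have hvu : v ≠ u := by
    rintro rfl
    exact C.valid hyv (hy.trans hu.symm)
  obtain ⟨-, rfl⟩ := middle_eq_of_seven_le_egirth hg hyw (hb'.ne_of_eq_none hy)
    (hb.ne_of_eq_none hu).symm hvu hby.symm hwb.symm huw.symm hyv hvb' hub'.symm
  obtain rfl : k = j := Option.some_injective _ (hw.symm.trans hb'.color_eq)
  exact hk w hb' huw

theorem IsReducedColoring.not_sees_none [Finite β] (hg : 8 ≤ G.egirth) (h : IsReducedColoring C)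
    (hspare : ∀ y, C y = none → ∃ j, IsRemote C y j) (hu : C u = none) (hi : IsRemote C u i)
    (hb : IsWeakBVertex C b i) : ¬ Sees C b none := by
  have hg₅ : 5 ≤ G.egirth := le_trans (by decide) hg
  rintro ⟨y, hby, hy⟩
  obtain ⟨j, hj⟩ := hspare y hy
  have hju := h.isRemote_of_isRemote (le_trans (by decide) hg) hu hi hb hy hby hj
  obtain ⟨b', hb'⟩ := h.isWeakBColoring j
  obtain ⟨w, huw, hwb, -⟩ := h.exists_link hg₅ hu hi hb
  obtain ⟨w', huw', hwb', -⟩ := h.exists_link hg₅ hu hju hb'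
  obtain ⟨v, hyv, hvb', -⟩ := h.exists_link hg₅ hy hj hb'
  exact not_adj_of_eight_le_egirth hg huw hwb hby huw' hwb' hvb'.symm hyv

theorem IsWeakBVertex.exists_isRedundant [Finite β] (hb : IsWeakBVertex C b i)
    (hnone : ¬ Sees C b none) : ∃ z, IsRedundant C b z := by
  have hmaps : Set.MapsTo C (G.neighborSet b) ({none}ᶜ \ {some i}) := fun x hbx ↦
    ⟨fun hx ↦ hnone ⟨x, hbx, hx⟩, fun hx ↦ C.valid hbx (hb.color_eq.trans hx.symm)⟩
  have hlt : ({none}ᶜ \ {some i} : Set (Option β)).encard < (G.neighborSet b).encard :=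
    calc ({none}ᶜ \ {some i} : Set (Option β)).encard < ({none}ᶜ : Set (Option β)).encard :=
          (Set.toFinite _).encard_lt_encard (Set.sdiff_singleton_ssubset.mpr (by simp))
      _ = ENat.card β := encard_compl_singleton_option none
      _ ≤ _ := hb.card_le_degree
  obtain ⟨z, hz, z', hz', hne, heq⟩ := Set.exists_ne_map_eq_of_encard_lt_of_maps_to hlt hmaps
  exact ⟨z, hz, z', hz', hne.symm, heq.symm⟩

theorem IsReducedColoring.exists_isSwitchable [Finite β] (hg : 8 ≤ G.egirth)
    (h : IsReducedColoring C) (hspare : ∀ y, C y = none → ∃ j, IsRemote C y j) (hu : C u = none)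
    (hi : IsRemote C u i) : ∃ b z, IsSwitchable C u i b z := by
  obtain ⟨b, hb⟩ := h.isWeakBColoring i
  obtain ⟨z, hz⟩ := hb.exists_isRedundant (h.not_sees_none hg hspare hu hi hb)
  exact ⟨b, z, hi, hb, hz⟩

theorem IsSwitchable.exists_link [Finite β] (hg : 5 ≤ G.egirth) (h : IsReducedColoring C)
    (hu : C u = none) (hz : IsSwitchable C u i b z) : ∃ w, G.Adj u w ∧ G.Adj w b := by
  obtain ⟨w, huw, hwb, -⟩ := h.exists_link hg hu hz.isRemote hz.isWeakBVertex
  exact ⟨w, huw, hwb⟩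

theorem IsSwitchable.not_adj [Finite β] (hg : 5 ≤ G.egirth) (h : IsReducedColoring C)
    (hu : C u = none) (hz : IsSwitchable C u i b z) : ¬ G.Adj u z := fun huz ↦ by
  obtain ⟨w, huw, hwb, j, -, hw, hunique⟩ := h.exists_link hg hu hz.isRemote hz.isWeakBVertex
  obtain ⟨hbz, z', hbz', hne, heq⟩ := hz.isRedundant
  have hzw : z = w :=
    middle_eq_of_five_le_egirth hg (hz.isWeakBVertex.ne_of_eq_none hu) huz hbz.symm huw hwb
  exact hne (hzw ▸ hunique z' hbz' (heq.trans (hzw ▸ hw)))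

theorem IsSwitchable.of_adj [Finite β] (hg : 8 ≤ G.egirth) (h : IsReducedColoring C)
    (hu : C u = none) (hz : IsSwitchable C u i b z) {y : V} (hzy : G.Adj z y) :
    IsSwitchable C y i b z where
  isRemote b' hb' hyb' := by
    have hg₅ : 5 ≤ G.egirth := le_trans (by decide) hg
    obtain ⟨w, huw, hwb⟩ := hz.exists_link hg₅ h hu
    obtain ⟨w', huw', hwb', -⟩ := h.exists_link hg₅ hu hz.isRemote hb'
    exact not_adj_of_eight_le_egirth hg huw hwb hz.isRedundant.1 huw' hwb' hyb'.symm hzy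
  isWeakBVertex := hz.isWeakBVertex
  isRedundant := hz.isRedundant

theorem IsSwitchable.not_sees_none [Finite β] (hg : 8 ≤ G.egirth) (h : IsReducedColoring C)
    (hu : C u = none) (hz : IsSwitchable C u i b z) : ¬ Sees C z none := by
  rintro ⟨y, hzy, hy⟩
  exact (hz.of_adj hg h hu hzy).not_adj (le_trans (by decide) hg) h hy hzy.symm

theorem IsSwitchable.not_adj_of_isSwitchable [Finite β] (hg : 8 ≤ G.egirth)
    (h : IsReducedColoring C) (hu : C u = none) (hz : IsSwitchable C u i b z) {i' : β} {b' z' : V}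
    (hz' : IsSwitchable C u i' b' z') : ¬ G.Adj z z' := by
  have hg₅ : 5 ≤ G.egirth := le_trans (by decide) hg
  obtain ⟨w, huw, hwb⟩ := hz.exists_link hg₅ h hu
  obtain ⟨w', huw', hwb'⟩ := hz'.exists_link hg₅ h hu
  exact not_adj_of_eight_le_egirth hg huw hwb hz.isRedundant.1 huw' hwb' hz'.isRedundant.1

theorem IsSwitchable.not_adj_of_adj [Finite β] (hg : 6 ≤ G.egirth) (h : IsReducedColoring C)
    (hu : C u = none) (hz : IsSwitchable C u i b z) {a : V} (hua : G.Adj u a) :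
    ¬ G.Adj a z := fun haz ↦ by
  obtain ⟨w, huw, hwb⟩ := hz.exists_link (le_trans (by decide) hg) h hu
  exact not_adj_of_six_le_egirth hg hua haz huw hwb hz.isRedundant.1.symm

theorem IsSwitchable.eq_of_adj [Finite β] (hg : 7 ≤ G.egirth) (h : IsReducedColoring C)
    (hu : C u = none) (hz : IsSwitchable C u i b z) {i' : β} {b' : V} (hi' : IsRemote C u i')
    (hb' : IsWeakBVertex C b' i') (hbz' : G.Adj b' z) : i' = i := by
  have hg₅ : 5 ≤ G.egirth := le_trans (by decide) hg
  have hne {w : V} (huw : G.Adj u w) : w ≠ z := fun hwz ↦ hz.not_adj hg₅ h hu (hwz ▸ huw)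
  obtain ⟨w, huw, hwb⟩ := hz.exists_link hg₅ h hu
  obtain ⟨w', huw', hwb', -⟩ := h.exists_link hg₅ hu hi' hb'
  obtain ⟨-, rfl⟩ := middle_eq_of_seven_le_egirth hg (hb'.ne_of_eq_none hu)
    (hz.isWeakBVertex.ne_of_eq_none hu) (hne huw') (hne huw) huw' hwb' hbz' huw hwb
    hz.isRedundant.1
  exact Option.some_injective _ (hb'.color_eq.symm.trans hz.isWeakBVertex.color_eq)

theorem IsSwitchable.ne_of_isRemote [Finite β] (hg : 6 ≤ G.egirth) (h : IsReducedColoring C)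
    (hu : C u = none) (hz : IsSwitchable C u i b z) {i' : β} {b' : V} (hi' : IsRemote C u i')
    (hb' : IsWeakBVertex C b' i') : b' ≠ z := by
  rintro rfl
  obtain ⟨w', huw', hwb', -⟩ := h.exists_link (le_trans (by decide) hg) hu hi' hb'
  exact hz.not_adj_of_adj hg h hu huw' hwb'

end Switchable

section Switching

variable {β : Type*} {G : SimpleGraph V} {C C' : G.Coloring (Option β)} {u : V} {i₀ j : β}
  {b z : β → V}

/-- `C'` arises from `C` by giving the spare color to one switchable vertex `z i` for each color
`i ≠ i₀` that is remote from `u`. The values of `b` and `z` at other colors are irrelevant. -/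
structure IsSwitching (C C' : G.Coloring (Option β)) (u : V) (i₀ : β) (b z : β → V) : Prop where
  isSwitchable i : IsRemote C u i → i ≠ i₀ → IsSwitchable C u i (b i) (z i)
  switched i : IsRemote C u i → i ≠ i₀ → C' (z i) = none
  unswitched v : (∀ i, IsRemote C u i → i ≠ i₀ → v ≠ z i) → C' v = C v

theorem IsReducedColoring.exists_isSwitching [Finite β] (hg : 8 ≤ G.egirth)
    (h : IsReducedColoring C) (hspare : ∀ y, C y = none → ∃ j, IsRemote C y j) (hu : C u = none)
    (i₀ : β) : ∃ C' b z, IsSwitching C C' u i₀ b z := by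
  have : Nonempty V := ⟨u⟩
  choose! b z hz using fun i (hi : IsRemote C u i) ↦ h.exists_isSwitchable hg hspare hu hi
  obtain ⟨C', hC'none, hC'⟩ := exists_coloring_piecewise C
    {v | ∃ i, IsRemote C u i ∧ i ≠ i₀ ∧ v = z i} (fun _ ↦ none)
    (by
      rintro _ ⟨i, hi, -, rfl⟩ _ ⟨i', hi', -, rfl⟩ hadj
      exact absurd hadj ((hz i hi).not_adj_of_isSwitchable hg h hu (hz i' hi')))
    (by
      rintro _ ⟨i, hi, -, rfl⟩ y - hadj heq
      exact (hz i hi).not_sees_none hg h hu ⟨y, hadj, heq.symm⟩)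
  exact ⟨C', b, z, fun i hi _ ↦ hz i hi, fun i hi hne ↦ hC'none _ ⟨i, hi, hne, rfl⟩,
    fun v hv ↦ hC' v fun ⟨i, hi, hne, hvz⟩ ↦ hv i hi hne hvz⟩

theorem IsSwitching.apply_eq_or (hs : IsSwitching C C' u i₀ b z) (v : V) :
    C' v = C v ∨ C' v = none ∧ ∃ i, IsRemote C u i ∧ i ≠ i₀ ∧ v = z i := by
  by_cases hv : ∃ i, IsRemote C u i ∧ i ≠ i₀ ∧ v = z i
  · obtain ⟨i, hi, hne, rfl⟩ := hv
    exact .inr ⟨hs.switched i hi hne, i, hi, hne, rfl⟩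
  · push Not at hv
    exact .inl (hs.unswitched v hv)

theorem IsSwitching.apply_eq_none (hs : IsSwitching C C' u i₀ b z) {v : V} (hv : C v = none) :
    C' v = none :=
  (hs.apply_eq_or v).elim (·.trans hv) And.left

theorem IsSwitching.apply_eq_some (hs : IsSwitching C C' u i₀ b z) {v : V} (hv : C' v = some j) :
    C v = some j := by
  rcases hs.apply_eq_or v with heq | ⟨hnone, -⟩
  · exact heq ▸ hv
  · exact absurd (hv.symm.trans hnone) (Option.some_ne_none j)

theorem IsSwitching.sees_some (hs : IsSwitching C C' u i₀ b z) {v : V} (hv : Sees C v (some j))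
    (hvz : ∀ i, IsRemote C u i → i ≠ i₀ → ¬ G.Adj v (z i)) : Sees C' v (some j) := by
  obtain ⟨x, hvx, hx⟩ := hv
  exact ⟨x, hvx, (hs.unswitched x fun i hi hne hxz ↦ hvz i hi hne (hxz ▸ hvx)).trans hx⟩

theorem IsSwitching.exists_not_sees [Finite β] (hg : 8 ≤ G.egirth)
    (h : IsReducedColoring C) (hspare : ∀ y, C y = none → ∃ j, IsRemote C y j) (hu : C u = none)
    (hs : IsSwitching C C' u i₀ b z) (hi₀ : IsRemote C u i₀) {v : V} (hv : C' v = some i₀) :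
    ∃ o ≠ some i₀, ¬ Sees C' v o := by
  by_contra! hsees
  have hweak : IsWeakBVertex C v i₀ :=
    { color_eq := hs.apply_eq_some hv
      sees := fun j hj ↦ (hsees (some j) ((Option.some_injective β).ne hj)).imp
        fun x hx ↦ ⟨hx.1, hs.apply_eq_some hx.2⟩
      card_le_degree := (isWeakBVertex_of_forall_sees hv hsees).card_le_degree }
  obtain ⟨x, hvx, hx⟩ := hsees none (Option.some_ne_none i₀).symm
  rcases hs.apply_eq_or x with heq | ⟨-, i, hi, hne, rfl⟩
  · exact h.not_sees_none hg hspare hu hi₀ hweak ⟨x, hvx, heq.symm.trans hx⟩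
  · exact hne ((hs.isSwitchable i hi hne).eq_of_adj (le_trans (by decide) hg) h hu hi₀ hweak
      hvx).symm

theorem IsSwitching.sees_of_isRemote [Finite β] (hg : 7 ≤ G.egirth) (h : IsReducedColoring C)
    (hu : C u = none) (hs : IsSwitching C C' u i₀ b z) (hj : IsRemote C u j) (hne : j ≠ i₀)
    {o : Option β} (ho : o ≠ some j) : Sees C' (b j) o := by
  have hz := hs.isSwitchable j hj hne
  have heq_z {x : V} (hbx : G.Adj (b j) x) : C' x = C x ∨ x = z j := by
    refine (hs.apply_eq_or x).imp_right ?_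
    rintro ⟨-, i, hi, hne, rfl⟩
    rw [(hs.isSwitchable i hi hne).eq_of_adj hg h hu hj hz.isWeakBVertex hbx]
  rcases o with _ | l
  · exact ⟨z j, hz.isRedundant.1, hs.switched j hj hne⟩
  · obtain ⟨x, hbx, hx⟩ := hz.isWeakBVertex.sees l fun heq ↦ ho (congrArg some heq)
    rcases heq_z hbx with heq | rfl
    · exact ⟨x, hbx, heq.trans hx⟩
    · obtain ⟨-, x', hbx', hx'z, hx'⟩ := hz.isRedundant
      exact ⟨x', hbx', ((heq_z hbx').resolve_right hx'z).trans (hx'.trans hx)⟩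

theorem IsSwitching.exists_sees [Finite β] (hg : 7 ≤ G.egirth) (h : IsReducedColoring C)
    (hu : C u = none) (hs : IsSwitching C C' u i₀ b z) {o : Option β} (ho : o ≠ some i₀) :
    ∃ v, C' v = o ∧ ∀ l ≠ some i₀, l ≠ o → Sees C' v l := by
  have hg₆ : 6 ≤ G.egirth := le_trans (by decide) hg
  have hg₅ : 5 ≤ G.egirth := le_trans (by decide) hg
  rcases o with _ | j
  · refine ⟨u, hs.apply_eq_none hu, fun l _ hl ↦ ?_⟩
    obtain ⟨l, rfl⟩ := Option.ne_none_iff_exists'.mp hl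
    exact hs.sees_some (h.sees hg₅ hu l) fun i hi hne ↦
      (hs.isSwitchable i hi hne).not_adj hg₅ h hu
  have hj : j ≠ i₀ := fun heq ↦ ho (congrArg some heq)
  by_cases hremote : IsRemote C u j
  · have hbj := (hs.isSwitchable j hremote hj).isWeakBVertex
    exact ⟨b j, (hs.unswitched _ fun i hi hne ↦
      (hs.isSwitchable i hi hne).ne_of_isRemote hg₆ h hu hremote hbj).trans hbj.color_eq,
      fun l _ hl ↦ hs.sees_of_isRemote hg h hu hremote hj hl⟩
  · simp only [IsRemote] at hremote
    push Not at hremote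
    obtain ⟨a, ha, hua⟩ := hremote
    refine ⟨a, (hs.unswitched a fun i hi hne haz ↦
      (hs.isSwitchable i hi hne).not_adj hg₅ h hu (haz ▸ hua)).trans ha.color_eq,
      fun l _ hl ↦ ?_⟩
    rcases l with _ | l
    · exact ⟨u, hua.symm, hs.apply_eq_none hu⟩
    · exact hs.sees_some (ha.sees l fun heq ↦ hl (congrArg some heq)) fun i hi hne ↦
        (hs.isSwitchable i hi hne).not_adj_of_adj hg₆ h hu hua

theorem IsWeakBColoring.bColorable (hC : IsWeakBColoring C) (hnone : ∀ v, C v ≠ none) :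
    BColorable G β := by
  classical
  refine (bColorable_ne_of_not_sees C none (fun v hv ↦ absurd hv (hnone v)) fun o ho ↦ ?_).congr
    (Equiv.optionSubtypeNe none).removeNone
  obtain ⟨i, rfl⟩ := Option.ne_none_iff_exists'.mp ho
  obtain ⟨b, hb⟩ := hC i
  refine ⟨b, hb.color_eq, fun l hl hli ↦ ?_⟩
  obtain ⟨l, rfl⟩ := Option.ne_none_iff_exists'.mp hl
  exact hb.sees l fun heq ↦ hli (congrArg some heq)

theorem IsReducedColoring.bColorable_of_isRemote [Finite β] (hg : 8 ≤ G.egirth)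
    (h : IsReducedColoring C) (hspare : ∀ y, C y = none → ∃ j, IsRemote C y j) :
    BColorable G β := by
  classical
  by_cases hnone : ∀ v, C v ≠ none
  · exact h.isWeakBColoring.bColorable hnone
  push Not at hnone
  obtain ⟨u, hu⟩ := hnone
  obtain ⟨i₀, hi₀⟩ := hspare u hu
  obtain ⟨C', b, z, hs⟩ := h.exists_isSwitching hg hspare hu i₀
  exact (bColorable_ne_of_not_sees C' (some i₀)
    (fun v hv ↦ hs.exists_not_sees hg h hspare hu hi₀ hv)
    (fun o ho ↦ hs.exists_sees (le_trans (by decide) hg) h hu ho)).congr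
    (Equiv.optionSubtypeNe (some i₀)).removeNone

end Switching

section Descent

variable {α β : Type*} {G : SimpleGraph V}

theorem BColorable.exists_isWeakBColoring (h : BColorable G (Option β)) :
    ∃ C : G.Coloring (Option β), IsWeakBColoring C := by
  obtain ⟨C, hC⟩ := h
  refine ⟨C, fun i ↦ ?_⟩
  obtain ⟨b, hb, hsees⟩ := hC (some i)
  exact ⟨b, isWeakBVertex_of_forall_sees hb hsees⟩

theorem isIris_comp_of_isWeakBVertex {C : G.Coloring (Option β)} {u : V} {b : β → V} (e : α ↪ β)
    (hb : ∀ i, IsWeakBVertex C (b i) i) (hub : ∀ i, G.Adj u (b i)) : IsIris_s4 G u (b ∘ e) where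
  injective i j hij := e.injective <| Option.some_injective β <|
    (hb (e i)).color_eq.symm.trans ((congrArg C hij).trans (hb (e j)).color_eq)
  adj i := hub (e i)
  card_le_degree i := (ENat.card_le_card_of_injective e.injective).trans (hb (e i)).card_le_degree

theorem BColorable.of_option [Finite V] [Finite α] (hg : 8 ≤ G.egirth) (f : G.Coloring α)
    (h : BColorable G (Option (Option α))) : BColorable G (Option α) := by
  obtain ⟨C, hC⟩ := exists_isReducedColoring h.exists_isWeakBColoring
  by_cases hspare : ∀ y, C y = none → ∃ i, IsRemote C y i
  · exact hC.bColorable_of_isRemote hg hspare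
  · simp only [IsRemote] at hspare
    push Not at hspare
    obtain ⟨u, -, hu⟩ := hspare
    choose b hb hub using hu
    exact (isIris_comp_of_isWeakBVertex .some hb hub).bColorable hg f

theorem BColorable.of_succ [Finite V] (hg : 8 ≤ G.egirth) {n : ℕ} (hn : G.Colorable n)
    (h : BColorable G (Fin (n + 2))) : BColorable G (Fin (n + 1)) :=
  ((h.congr ((finSuccEquiv (n + 1)).trans (finSuccEquiv n).optionCongr)).of_option hg
    hn.some).congr (finSuccEquiv n).symm

theorem BColorable.of_le [Finite V] (hg : 8 ≤ G.egirth) {n m : ℕ} (hn : G.Colorable n)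
    (hnm : n + 1 ≤ m) (h : BColorable G (Fin m)) : BColorable G (Fin (n + 1)) := by
  induction m, hnm using Nat.le_induction with
  | base => exact h
  | succ m hnm ih =>
    obtain ⟨k, rfl⟩ := Nat.exists_eq_add_of_le' (Nat.one_le_of_lt hnm)
    exact ih (h.of_succ hg (hn.mono (Nat.le_of_succ_le_succ hnm)))

theorem IsBColoring.le_card [Fintype V] {k : ℕ} {c : V → ℕ} (h : IsBColoring G k c) :
    k ≤ Fintype.card V := by
  choose v hv using fun i : Fin k ↦ h.1.2.2 i i.isLt
  have hinj : Function.Injective v := fun i j hij ↦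
    Fin.ext ((hv i).symm.trans ((congrArg c hij).trans (hv j)))
  simpa using Fintype.card_le_of_injective v hinj

theorem bColorable_bChrom [Fintype V] (G : SimpleGraph V) : BColorable G (Fin (bChrom G)) := by
  obtain ⟨n, hn⟩ := ENat.ne_top_iff_exists.mp
    (chromaticNumber_ne_top_iff_exists.mpr ⟨_, G.colorable_of_fintype⟩)
  exact bColorable_fin_iff.mpr <| Nat.sSup_mem
    (s := {k | ∃ c : V → ℕ, IsBColoring G k c})
    ⟨n, bColorable_fin_iff.mp (bColorable_fin_of_chromaticNumber_eq hn.symm)⟩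
    ⟨Fintype.card V, fun _ ⟨_, hc⟩ ↦ hc.le_card⟩

end Descent

/-- Graphs of girth at least 8 are b-continuous. -/
theorem bContinuous_of_eight_le_girth [Fintype V] (G : SimpleGraph V)
    (hg : (8 : ℕ∞) ≤ G.egirth) (k : ℕ)
    (h1 : G.chromaticNumber ≤ (k : ℕ∞)) (h2 : k ≤ bChrom G) :
    ∃ c : V → ℕ, IsBColoring G k c := by
  refine bColorable_fin_iff.mp ?_
  obtain heq | hlt := h1.eq_or_lt
  · exact bColorable_fin_of_chromaticNumber_eq heq
  obtain ⟨n, rfl⟩ : ∃ n, k = n + 1 :=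
    Nat.exists_eq_add_one.mpr (by exact_mod_cast pos_of_gt hlt)
  have hn : G.Colorable n :=
    chromaticNumber_le_iff_colorable.mp (ENat.lt_natCast_add_one_iff.mp (by exact_mod_cast hlt))
  exact (bColorable_bChrom G).of_le hg hn h2
end

section
/- If a graph G has girth at least 7, then for every integer k with 2χ(G) ≤ k ≤ b(G), G admits a b-coloring with k colors. -/
open SimpleGraph

variable {V : Type*}

/-!
Deleting the color classes above `k` from a `b(G)`-coloring leaves a partial coloring in which every
color has a b-vertex of degree at least `k`. Take such a partial coloring with a minimal set of
uncolored vertices, and let `v` be uncolored. Give `v` a color `i`, moving the neighbors of `v` with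
color `i` to other colors: by minimality this cannot work if none of these neighbors is a b-vertex
of large degree, so then some color `j` blocks `i`, in the sense that its b-vertices see `i` only on
neighbors of `v`. Blocking permutes the colors in question, and since short cycles are absent a
recoloring along a path `v, w, u, x`, where `u` is a b-vertex of color `j` and `w` has color `i`,
contradicts minimality. So every color has a b-vertex next to `v`. These neighbors and their
neighbors form a tree of depth 2 that meets the neighborhood of any outside vertex at most once;
hence two colors for each of the `χ(G)` classes of an optimal coloring suffice outside the tree.
-/

theorem egirth_le_length_add_one {G : SimpleGraph V} {a b : V} (hab : G.Adj a b)
    {p : G.Walk b a} (hp : p.IsPath) (hlen : 2 ≤ p.length) : G.egirth ≤ p.length + 1 := by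
  have hcycle : (Walk.cons hab p).IsCycle :=
    Walk.isCycle_iff_isPath_tail_and_le_length.2
      ⟨by simpa using hp, by simpa using Nat.succ_le_succ hlen⟩
  simpa using egirth_le_length hcycle

/-- The elementary form of `7 ≤ G.egirth`: there are no closed walks of length 3 to 6 that never
turn back. In the absence of triangles no closed walk of length 5 turns back, so `pentagon` lists no
inequalities. -/
structure NoShortCycles (G : SimpleGraph V) : Prop where
  triangle : ∀ ⦃a b c⦄, G.Adj a b → G.Adj b c → G.Adj c a → False
  square : ∀ ⦃a b c d⦄, G.Adj a b → G.Adj b c → G.Adj c d → G.Adj d a → a ≠ c → b ≠ d → False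
  pentagon : ∀ ⦃a b c d e⦄, G.Adj a b → G.Adj b c → G.Adj c d → G.Adj d e → G.Adj e a → False
  hexagon : ∀ ⦃a b c d e f⦄, G.Adj a b → G.Adj b c → G.Adj c d → G.Adj d e → G.Adj e f →
    G.Adj f a → a ≠ c → b ≠ d → c ≠ e → d ≠ f → e ≠ a → f ≠ b → False

theorem noShortCycles_of_seven_le_egirth {G : SimpleGraph V} (hG : 7 ≤ G.egirth) :
    NoShortCycles G := by
  have not_isPath : ∀ ⦃a b⦄ (_ : G.Adj a b) (p : G.Walk b a), 2 ≤ p.length → p.length < 6 →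
      ¬ p.IsPath := fun a b hab p hlen hlt hp ↦ by
    have : 7 ≤ p.length + 1 := mod_cast hG.trans (egirth_le_length_add_one hab hp hlen)
    omega
  have triangle : ∀ ⦃a b c⦄, G.Adj a b → G.Adj b c → G.Adj c a → False := by
    intro a b c hab hbc hca
    apply not_isPath hab (.cons hbc (.cons hca .nil)) (by simp) (by simp)
    simp [hbc.ne, hca.ne, hab.ne']
  refine ⟨triangle, ?_, ?_, ?_⟩
  · intro a b c d hab hbc hcd hda hac hbd
    apply not_isPath hab (.cons hbc (.cons hcd (.cons hda .nil))) (by simp) (by simp)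
    simp [hbc.ne, hcd.ne, hda.ne, hab.ne', hac.symm, hbd]
  · intro a b c d e hab hbc hcd hde hea
    have hbd : b ≠ d := by rintro rfl; exact triangle hde hea hab
    have hbe : b ≠ e := by rintro rfl; exact triangle hbc hcd hde
    have hce : c ≠ e := by rintro rfl; exact triangle hea hab hbc
    have hca : c ≠ a := by rintro rfl; exact triangle hcd hde hea
    have hda : d ≠ a := by rintro rfl; exact triangle hab hbc hcd
    apply not_isPath hab (.cons hbc (.cons hcd (.cons hde (.cons hea .nil)))) (by simp) (by simp)
    simp [hbc.ne, hcd.ne, hde.ne, hea.ne, hab.ne', hbd, hbe, hce, hca, hda]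
  · intro a b c d e f hab hbc hcd hde hef hfa hac hbd hce hdf hea hfb
    have hda : d ≠ a := by rintro rfl; exact triangle hab hbc hcd
    have hbe : b ≠ e := by rintro rfl; exact triangle hbc hcd hde
    have hcf : c ≠ f := by rintro rfl; exact triangle hcd hde hef
    apply not_isPath hab (.cons hbc (.cons hcd (.cons hde (.cons hef (.cons hfa .nil)))))
      (by simp) (by simp)
    simp [hbc.ne, hcd.ne, hde.ne, hef.ne, hfa.ne, hab.ne', hac.symm, hbd, hce, hdf, hea, hfb.symm,
      hda, hbe, hcf]

theorem encard_Iio_nat (k : ℕ) : (Set.Iio k).encard = k := by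
  simp [← Finset.coe_Iio, Set.encard_coe_eq_coe_finsetCard]

theorem exists_forall_not_of_encard_lt {α β : Type*} {s : Set α} {t : Set β}
    (hlt : t.encard < s.encard) (R : α → β → Prop)
    (hR : ∀ b ∈ t, ∀ a ∈ s, ∀ a' ∈ s, R a b → R a' b → a = a') :
    ∃ a ∈ s, ∀ b ∈ t, ¬ R a b := by
  by_contra! h
  have : Nonempty β := let ⟨a, ha⟩ := Set.encard_pos.1 (pos_of_gt hlt); let ⟨b, _⟩ := h a ha; ⟨b⟩
  choose! f hft hfR using h
  obtain ⟨a, ha, a', ha', hne, hff⟩ := Set.exists_ne_map_eq_of_encard_lt_of_maps_to hlt hft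
  exact hne (hR _ (hft a ha) a ha a' ha' (hfR a ha) (hff ▸ hfR a' ha'))

section PartialColoring

variable {G : SimpleGraph V} {k i : ℕ} {c c' : V → ℕ} {u v : V}

/-- A proper coloring of part of `G` with the colors `0, …, k-1`; a vertex `v` with `k ≤ c v` is
regarded as uncolored. -/
def IsPartialColoring (G : SimpleGraph V) (k : ℕ) (c : V → ℕ) : Prop :=
  ∀ ⦃u v⦄, G.Adj u v → c u < k → c u ≠ c v

/-- The vertices left uncolored by a partial coloring with `k` colors. -/
def uncolored (k : ℕ) (c : V → ℕ) : Set V := {v | k ≤ c v}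

/-- A b-vertex of degree at least `k`, one more than a b-vertex needs. -/
def IsLargeBVertex (G : SimpleGraph V) (k : ℕ) (c : V → ℕ) (u : V) : Prop :=
  k ≤ (G.neighborSet u).encard ∧ IsBVertex G k c u

/-- A partial coloring in which every one of the `k` colors has a large b-vertex. -/
def IsPartialBColoring (G : SimpleGraph V) (k : ℕ) (c : V → ℕ) : Prop :=
  IsPartialColoring G k c ∧ ∀ i < k, ∃ u, c u = i ∧ IsLargeBVertex G k c u

theorem ne_of_lt_of_le_color (hu : c u < k) (hv : k ≤ c v) : u ≠ v := by
  rintro rfl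
  exact hu.not_ge hv

theorem isBColoring_of_forall_exists_isBVertex (hlt : ∀ v, c v < k)
    (hadj : ∀ u v, G.Adj u v → c u ≠ c v) (hb : ∀ i < k, ∃ u, c u = i ∧ IsBVertex G k c u) :
    IsBColoring G k c :=
  ⟨⟨hlt, hadj, fun i hi ↦ (hb i hi).imp fun _ ↦ And.left⟩, hb⟩

theorem IsPartialBColoring.isBColoring (hc : IsPartialBColoring G k c) (hlt : ∀ v, c v < k) :
    IsBColoring G k c :=
  isBColoring_of_forall_exists_isBVertex hlt (fun u _ huv ↦ hc.1 huv (hlt u)) fun i hi ↦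
    (hc.2 i hi).imp fun _ hu ↦ ⟨hu.1, hu.2.2⟩

theorem le_encard_add_one_of_forall_ne_exists_color {s : Set V} {a : ℕ}
    (hs : ∀ j < k, j ≠ a → ∃ w ∈ s, c w = j) : k ≤ s.encard + 1 :=
  calc (k : ℕ∞) = (Set.Iio k).encard := (encard_Iio_nat k).symm
    _ ≤ (insert a (c '' s)).encard := Set.encard_le_encard fun j hj ↦
        (eq_or_ne j a).imp id fun hja ↦ hs j hj hja
    _ ≤ (c '' s).encard + 1 := Set.encard_insert_le _ _
    _ ≤ s.encard + 1 := by gcongr; exact Set.encard_image_le c s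

theorem IsBColoring.isPartialBColoring {K : ℕ} (hc : IsBColoring G K c) (hk : k < K) :
    IsPartialBColoring G k c := by
  refine ⟨fun u v huv _ ↦ hc.1.2.1 u v huv, fun i hi ↦ ?_⟩
  obtain ⟨u, hu, hbu⟩ := hc.2 i (hi.trans hk)
  refine ⟨u, hu, ?_, fun j hj ↦ hbu j (hj.trans hk)⟩
  have hdeg : (K : ℕ∞) ≤ (G.neighborSet u).encard + 1 :=
    le_encard_add_one_of_forall_ne_exists_color hbu
  have hkK : (k : ℕ∞) + 1 ≤ K := mod_cast hk
  exact (ENat.add_le_add_iff_right ENat.one_ne_top).1 (hkK.trans hdeg)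

theorem IsLargeBVertex.of_forall_adj (hu : IsLargeBVertex G k c u) (hcu : c' u = c u)
    (hadj : ∀ z, G.Adj u z → c z < k → c z ≠ c u → ∃ z', G.Adj u z' ∧ c' z' = c z) :
    IsLargeBVertex G k c' u := by
  refine ⟨hu.1, fun j hj hju ↦ ?_⟩
  obtain ⟨z, huz, rfl⟩ := hu.2 j hj (hcu ▸ hju)
  exact hadj z huz hj (hcu ▸ hju)

/-- `p` could be given another of the `k` colors without conflict with any neighbor except
possibly `v`. -/
def HasSpareColor (G : SimpleGraph V) (k : ℕ) (c : V → ℕ) (v p : V) : Prop :=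
  ∃ a < k, a ≠ c p ∧ ∀ r, G.Adj p r → r ≠ v → c r ≠ a

theorem hasSpareColor_of_not_isLargeBVertex {p : V} (hpv : G.Adj p v)
    (hp : ¬ IsLargeBVertex G k c p) : HasSpareColor G k c v p := by
  contrapose! hp
  have hblocked : ∀ j < k, j ≠ c p → ∃ r ∈ G.neighborSet p \ {v}, c r = j := by
    intro j hj hjp
    by_contra! h
    exact hp ⟨j, hj, hjp, fun r hpr hrv ↦ h r ⟨hpr, hrv⟩⟩
  refine ⟨?_, fun j hj hjp ↦ ?_⟩
  · rw [← Set.encard_sdiff_singleton_add_one (show v ∈ G.neighborSet p from hpv)]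
    exact le_encard_add_one_of_forall_ne_exists_color hblocked
  · obtain ⟨r, hr, hrj⟩ := hblocked j hj hjp
    exact ⟨r, hr.1, hrj⟩

theorem HasSpareColor.congr {p : V} (h : HasSpareColor G k c v p) (hp : c' p = c p)
    (hadj : ∀ r, G.Adj p r → r ≠ v → c' r = c r) : HasSpareColor G k c' v p := by
  obtain ⟨a, hak, hap, ha⟩ := h
  exact ⟨a, hak, hp ▸ hap, fun r hpr hrv ↦ hadj r hpr hrv ▸ ha r hpr hrv⟩

/-- `c'` is a partial coloring that arises from `c` by giving `v` the color `i` and moving the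
neighbors of `v` that had this color to arbitrary other colors. -/
structure IsRecoloring (G : SimpleGraph V) (k : ℕ) (c : V → ℕ) (v : V) (i : ℕ) (c' : V → ℕ) :
    Prop where
  isPartialColoring : IsPartialColoring G k c'
  uncolored_subset : uncolored k c' ⊆ uncolored k c
  center : c' v = i
  eq_of_ne : ∀ ⦃p⦄, p ≠ v → (G.Adj v p → c p ≠ i) → c' p = c p

theorem IsPartialColoring.of_eqOn_compl (hc : IsPartialColoring G k c) {S : Set V}
    (heq : Set.EqOn c' c Sᶜ) (hS : ∀ p ∈ S, ∀ q, G.Adj p q → c' p ≠ c' q) :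
    IsPartialColoring G k c' := by
  intro p q hpq hpk
  by_cases hp : p ∈ S
  · exact hS p hp q hpq
  by_cases hq : q ∈ S
  · exact (hS q hq p hpq.symm).symm
  rw [heq hp] at hpk ⊢
  rw [heq hq]
  exact hc hpq hpk

theorem IsPartialColoring.exists_isRecoloring (hc : IsPartialColoring G k c)
    (htri : ∀ ⦃a b c⦄, G.Adj a b → G.Adj b c → G.Adj c a → False) (hi : i < k)
    (hspare : ∀ p, G.Adj v p → c p = i → HasSpareColor G k c v p) :
    ∃ c', IsRecoloring G k c v i c' := by
  classical
  simp only [HasSpareColor] at hspare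
  choose! a hak hac ha using hspare
  let c' : V → ℕ := fun p ↦ if p = v then i else if G.Adj v p ∧ c p = i then a p else c p
  have center : c' v = i := by simp [c']
  have moved : ∀ ⦃p⦄, G.Adj v p → c p = i → c' p = a p := by
    intro p hvp hpi
    simp [c', hvp.ne', hvp, hpi]
  have eq_of_ne : ∀ ⦃p⦄, p ≠ v → (G.Adj v p → c p ≠ i) → c' p = c p := by
    intro p hpv hp
    simp [c', hpv, not_and.2 hp]
  have ne_of_changed : ∀ p q, G.Adj p q → p = v ∨ G.Adj v p ∧ c p = i → c' p ≠ c' q := by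
    rintro p q hpq (rfl | ⟨hvp, hpi⟩)
    · rw [center]
      by_cases hq : c q = i
      · rw [moved hpq hq]
        exact (hq ▸ hac q hpq hq).symm
      · rwa [eq_of_ne hpq.ne' fun _ ↦ hq, ne_comm]
    · rw [moved hvp hpi]
      by_cases hqv : q = v
      · rw [hqv, center, ← hpi]
        exact hac p hvp hpi
      · rw [eq_of_ne hqv fun hvq ↦ (htri hvp hpq hvq.symm).elim]
        exact (ha p hvp hpi q hpq hqv).symm
  refine ⟨c', hc.of_eqOn_compl (S := {p | p = v ∨ G.Adj v p ∧ c p = i}) (fun p hp ↦ ?_)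
    fun p hp q hpq ↦ ne_of_changed p q hpq hp, fun p hp ↦ ?_, center, eq_of_ne⟩
  · exact eq_of_ne (fun h ↦ hp (Or.inl h)) fun hvp hpi ↦ hp (Or.inr ⟨hvp, hpi⟩)
  · by_contra hpk
    by_cases hvp : G.Adj v p ∧ c p = i <;> grind [uncolored]

end PartialColoring

section Extension

variable {G : SimpleGraph V} {k n : ℕ} {c : V → ℕ} {v : V}

/- The colors `2a` and `2a + 1` are reserved for the vertices that `f` colors `a`. Such a vertex
outside `S` may use either of them, and its only neighbor in `S` blocks at most one. -/
theorem exists_coloring_extending {S : Set V} (f : G.Coloring (Fin n)) (hn : 2 * n ≤ k)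
    (hlt : ∀ p ∈ S, c p < k) (hadj : ∀ p ∈ S, ∀ q ∈ S, G.Adj p q → c p ≠ c q)
    (hS : ∀ p ∉ S, ∀ q ∈ S, ∀ q' ∈ S, G.Adj p q → G.Adj p q' → q = q') :
    ∃ c' : V → ℕ, Set.EqOn c' c S ∧ (∀ p, c' p < k) ∧ ∀ p q, G.Adj p q → c' p ≠ c' q := by
  classical
  have exists_free : ∀ p, ∃ a : ℕ, a / 2 = f p ∧ (p ∉ S → ∀ q ∈ S, G.Adj p q → c q ≠ a) := by
    intro p
    by_cases h : ∃ q ∈ S, G.Adj p q ∧ c q = 2 * f p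
    · obtain ⟨q, hq, hpq, hcq⟩ := h
      refine ⟨2 * f p + 1, by omega, fun hp q' hq' hpq' ↦ ?_⟩
      rw [← hS p hp q hq q' hq' hpq hpq']
      omega
    · push Not at h
      exact ⟨2 * f p, by omega, fun _ ↦ h⟩
  choose a hf ha using exists_free
  refine ⟨S.piecewise c a, Set.piecewise_eqOn S c a, fun p ↦ ?_, fun p q hpq ↦ ?_⟩
  · by_cases hp : p ∈ S
    · simpa [hp] using hlt p hp
    · have := hf p
      have := (f p).isLt
      simp only [hp, not_false_eq_true, Set.piecewise_eq_of_notMem]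
      omega
  · by_cases hp : p ∈ S <;> by_cases hq : q ∈ S <;>
      simp only [hp, hq, not_false_eq_true, Set.piecewise_eq_of_mem, Set.piecewise_eq_of_notMem]
    · exact hadj p hp q hq hpq
    · exact ha q hq p hp hpq.symm
    · exact (ha p hp q hq hpq).symm
    · intro h
      exact f.valid hpq (Fin.ext (by rw [← hf p, ← hf q, h]))

/-- Every vertex of `S` is reached from `v` by a walk of length at most 2 inside `S`. -/
def HasDepthTwo (G : SimpleGraph V) (v : V) (S : Set V) : Prop :=
  v ∈ S ∧ ∀ q ∈ S, q = v ∨ G.Adj v q ∨ ∃ y ∈ S, G.Adj v y ∧ G.Adj y q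

theorem NoShortCycles.eq_of_adj_of_hasDepthTwo (hG : NoShortCycles G) {S : Set V}
    (hS : HasDepthTwo G v S) {p q q' : V} (hp : p ∉ S) (hq : q ∈ S) (hq' : q' ∈ S)
    (hpq : G.Adj p q) (hpq' : G.Adj p q') : q = q' := by
  have hpne : ∀ {y}, y ∈ S → p ≠ y := fun hy hpy ↦ hp (hpy ▸ hy)
  have hdepth : ∀ r ∈ S, r = v ∨ G.Adj v r ∨ r ≠ v ∧ ∃ y ∈ S, G.Adj v y ∧ G.Adj y r := by
    intro r hr
    have := hS.2 r hr
    tauto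
  by_contra hne
  rcases hdepth q hq with rfl | hvq | ⟨hqv, y, hy, hvy, hyq⟩ <;>
    rcases hdepth q' hq' with rfl | hvq' | ⟨hqv', y', hy', hvy', hyq'⟩
  · exact hne rfl
  · exact hG.triangle hpq hvq' hpq'.symm
  · exact hG.square hpq hvy' hyq' hpq'.symm (hpne hy') hne
  · exact hG.triangle hpq hvq.symm hpq'.symm
  · exact hG.square hpq hvq.symm hvq' hpq'.symm (hpne hS.1) hne
  · exact hG.pentagon hpq hvq.symm hvy' hyq' hpq'.symm
  · exact hG.square hpq hyq.symm hvy.symm hpq'.symm (hpne hy) hne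
  · exact hG.pentagon hpq hyq.symm hvy.symm hvq' hpq'.symm
  · rcases eq_or_ne y y' with rfl | hyy
    · exact hG.square hpq hyq.symm hyq' hpq'.symm (hpne hy) hne
    · exact hG.hexagon hpq hyq.symm hvy.symm hvy' hyq' hpq'.symm (hpne hy) hqv hyy hqv'.symm
        (hpne hy').symm (Ne.symm hne)

/-- The neighbors of `v` that are to become the b-vertices of their colors once `v` has been given
the color `0`. -/
def colorfulNeighbors (G : SimpleGraph V) (k : ℕ) (c : V → ℕ) (v : V) : Set V :=
  {y | G.Adj v y ∧ 0 < c y ∧ c y < k ∧ IsBVertex G k c y}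

/-- The tree of depth 2 formed by `v`, its colorful neighbors, and those of their neighbors that
have a nonzero color. -/
def colorfulTree (G : SimpleGraph V) (k : ℕ) (c : V → ℕ) (v : V) : Set V :=
  insert v (colorfulNeighbors G k c v ∪
    {s | 0 < c s ∧ c s < k ∧ ∃ y ∈ colorfulNeighbors G k c v, G.Adj y s})

theorem hasDepthTwo_colorfulTree : HasDepthTwo G v (colorfulTree G k c v) := by
  refine ⟨Set.mem_insert _ _, ?_⟩
  rintro q (rfl | hq | ⟨-, -, y, hy, hyq⟩)
  · exact Or.inl rfl
  · exact Or.inr (Or.inl hq.1)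
  · exact Or.inr (Or.inr ⟨y, Or.inr (Or.inl hy), hy.1, hyq⟩)

theorem color_mem_Ioo_of_mem_colorfulTree {q : V} (hq : q ∈ colorfulTree G k c v) (hqv : q ≠ v) :
    0 < c q ∧ c q < k := by
  rcases hq with rfl | hq | hq
  · exact absurd rfl hqv
  · exact ⟨hq.2.1, hq.2.2.1⟩
  · exact ⟨hq.1, hq.2.1⟩

theorem exists_isBVertex_of_eqOn_colorfulTree {c' : V → ℕ} (hv : k ≤ c v)
    (hy : ∀ i < k, ∃ y, G.Adj v y ∧ c y = i ∧ IsBVertex G k c y) (hcv : c' v = 0)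
    (hc' : ∀ p ∈ colorfulTree G k c v, p ≠ v → c' p = c p) {i : ℕ} (hi : i < k) :
    ∃ u, c' u = i ∧ IsBVertex G k c' u := by
  have exists_neighbor : ∀ j < k, j ≠ 0 → ∃ y ∈ colorfulNeighbors G k c v, c y = j ∧ c' y = j := by
    intro j hj hj0
    obtain ⟨y, hvy, rfl, hby⟩ := hy j hj
    have hmem : y ∈ colorfulNeighbors G k c v := ⟨hvy, Nat.pos_of_ne_zero hj0, hj, hby⟩
    exact ⟨y, hmem, rfl, hc' y (Or.inr (Or.inl hmem)) hvy.ne'⟩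
  rcases eq_or_ne i 0 with rfl | hi0
  · refine ⟨v, hcv, fun j hj hj0 ↦ ?_⟩
    obtain ⟨y, hmem, -, hcy⟩ := exists_neighbor j hj (hcv ▸ hj0)
    exact ⟨y, hmem.1, hcy⟩
  obtain ⟨y, hmem, hy, hy'⟩ := exists_neighbor i hi hi0
  refine ⟨y, hy', fun j hj hji ↦ ?_⟩
  rcases eq_or_ne j 0 with rfl | hj0
  · exact ⟨v, hmem.1.symm, hcv⟩
  obtain ⟨s, hys, rfl⟩ := hmem.2.2.2 j hj (by rwa [hy, ← hy'])
  exact ⟨s, hys, hc' s (Or.inr (Or.inr ⟨Nat.pos_of_ne_zero hj0, hj, y, hmem, hys⟩))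
    (ne_of_lt_of_le_color hj hv)⟩

theorem exists_isBColoring_of_neighbors (hG : NoShortCycles G) (f : G.Coloring (Fin n))
    (hn : 2 * n ≤ k) (hc : IsPartialColoring G k c) (hv : k ≤ c v)
    (hy : ∀ i < k, ∃ y, G.Adj v y ∧ c y = i ∧ IsBVertex G k c y) :
    ∃ c' : V → ℕ, IsBColoring G k c' := by
  classical
  have hk : 0 < k := by have := (f v).isLt; omega
  have hcol : ∀ p ∈ colorfulTree G k c v, p ≠ v → 0 < c p ∧ c p < k :=
    fun p ↦ color_mem_Ioo_of_mem_colorfulTree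
  obtain ⟨c', heq, hlt, hadj⟩ := exists_coloring_extending (S := colorfulTree G k c v)
    (c := Function.update c v 0) f hn
    (by
      intro p hp
      rcases eq_or_ne p v with rfl | hpv
      · simpa using hk
      · simpa [hpv] using (hcol p hp hpv).2)
    (by
      intro p hp q hq hpq
      rcases eq_or_ne p v with rfl | hpv
      · simpa [hpq.ne'] using (hcol q hq hpq.ne').1.ne
      rcases eq_or_ne q v with rfl | hqv
      · simpa [hpv] using (hcol p hp hpv).1.ne'
      · simpa [hpv, hqv] using hc hpq (hcol p hp hpv).2)
    (fun p hp q hq q' hq' ↦ hG.eq_of_adj_of_hasDepthTwo hasDepthTwo_colorfulTree hp hq hq')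
  have hcv : c' v = 0 := by simpa using heq (hasDepthTwo_colorfulTree (c := c) (k := k)).1
  exact ⟨c', isBColoring_of_forall_exists_isBVertex hlt hadj fun i hi ↦
    exists_isBVertex_of_eqOn_colorfulTree hv hy hcv
      (fun p hp hpv ↦ by simpa [hpv] using heq hp) hi⟩

end Extension

section Rerouting

variable {G : SimpleGraph V} {k i d : ℕ} {c c' : V → ℕ} {v w u x : V}

/-- The walk `v, w, u, x` never turns back. -/
structure IsThreePath (G : SimpleGraph V) (v w u x : V) : Prop where
  adj_vw : G.Adj v w
  adj_wu : G.Adj w u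
  adj_ux : G.Adj u x
  ne_vu : v ≠ u
  ne_wx : w ≠ x

namespace IsThreePath

theorem not_adj (hP : IsThreePath G v w u x) (hG : NoShortCycles G) : ¬ G.Adj v x := fun h ↦
  hG.square hP.adj_vw hP.adj_wu hP.adj_ux h.symm hP.ne_vu hP.ne_wx

theorem not_adj_of_adj (hP : IsThreePath G v w u x) (hG : NoShortCycles G) {m : V}
    (hm : G.Adj v m) : ¬ G.Adj x m := fun h ↦
  hG.pentagon hP.adj_vw hP.adj_wu hP.adj_ux h hm.symm

theorem not_adj_of_adj_of_adj (hP : IsThreePath G v w u x) (hG : NoShortCycles G) {m y : V}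
    (hm : G.Adj v m) (hmw : m ≠ w) (hy : G.Adj x y) (hyu : y ≠ u) : ¬ G.Adj m y := fun h ↦
  hG.hexagon hP.adj_vw hP.adj_wu hP.adj_ux hy h.symm hm.symm hP.ne_vu hP.ne_wx hyu.symm
    (by rintro rfl; exact hP.not_adj hG hm) (by rintro rfl; exact hP.not_adj hG hy.symm) hmw

end IsThreePath

/-- `c'` is a partial coloring that arises from `c` by giving `v` and `x` the color `i` and `w` the
color `d`, and moving the neighbors of these vertices that had the new color to other colors. -/
structure IsRerouting (G : SimpleGraph V) (k : ℕ) (c : V → ℕ) (i d : ℕ) (v w x : V)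
    (c' : V → ℕ) : Prop where
  isPartialColoring : IsPartialColoring G k c'
  uncolored_subset : uncolored k c' ⊆ uncolored k c
  color_v : c' v = i
  color_w : c' w = d
  color_x : c' x = i
  eq_of_ne : ∀ ⦃p⦄, p ≠ v → p ≠ w → p ≠ x → (G.Adj v p → c p ≠ i) → (G.Adj w p → c p ≠ d) →
    (G.Adj x p → c p ≠ i) → c' p = c p

theorem IsThreePath.hasSpareColor_of_isRecoloring (hP : IsThreePath G v w u x)
    (hG : NoShortCycles G) (hdi : d ≠ i) (h : IsRecoloring G k c w d c')
    (hv : ∀ p, G.Adj v p → c p = i → HasSpareColor G k c v p) {p : V} (hvp : G.Adj v p)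
    (hp : c' p = i) : HasSpareColor G k c' v p := by
  have hpw : p ≠ w := by rintro rfl; exact hdi (h.center.symm.trans hp)
  have hwp : ¬ G.Adj w p := fun hwp ↦ hG.triangle hP.adj_vw hwp hvp.symm
  have hcp : c' p = c p := h.eq_of_ne hpw fun hwp' ↦ absurd hwp' hwp
  refine (hv p hvp (hcp ▸ hp)).congr hcp fun r hpr hrv ↦ h.eq_of_ne ?_ fun hwr ↦ ?_
  · rintro rfl; exact hwp hpr.symm
  · exact (hG.square hvp hpr hwr.symm hP.adj_vw.symm hrv.symm hpw).elim

theorem IsThreePath.hasSpareColor_of_isRecoloring_of_isRecoloring {c₁ c₂ : V → ℕ}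
    (hP : IsThreePath G v w u x) (hG : NoShortCycles G) (hdi : d ≠ i) (hui : c u ≠ i)
    (hud : c u ≠ d) (h₁ : IsRecoloring G k c w d c₁) (h₂ : IsRecoloring G k c₁ v i c₂)
    (hx : ∀ p, G.Adj x p → c p = i → HasSpareColor G k c x p) {p : V} (hxp : G.Adj x p)
    (hp : c₂ p = i) : HasSpareColor G k c₂ x p := by
  have hpv : p ≠ v := by rintro rfl; exact hP.not_adj hG hxp.symm
  have hvp : ¬ G.Adj v p := fun h ↦ hP.not_adj_of_adj hG h hxp
  have hpw : p ≠ w := by rintro rfl; exact hvp hP.adj_vw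
  have hwp : p ≠ u → ¬ G.Adj w p := fun hpu h ↦
    hG.square h hxp.symm hP.adj_ux.symm hP.adj_wu.symm hP.ne_wx hpu
  have hcp : c₂ p = c p := (h₂.eq_of_ne hpv fun h ↦ absurd h hvp).trans <|
    h₁.eq_of_ne hpw fun h ↦ (eq_or_ne p u).elim (· ▸ hud) fun hpu ↦ absurd h (hwp hpu)
  have hpu : p ≠ u := by rintro rfl; exact hui (hcp.symm.trans hp)
  refine (hx p hxp (hcp ▸ hp)).congr hcp fun r hpr _ ↦ ?_
  have hcr : c₁ r = c r := h₁.eq_of_ne (by rintro rfl; exact hwp hpu hpr.symm) fun hwr ↦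
    (hG.pentagon hP.adj_wu hP.adj_ux hxp hpr hwr.symm).elim
  refine (h₂.eq_of_ne (by rintro rfl; exact hvp hpr.symm) fun hvr hri ↦ ?_).trans hcr
  have hrw : r ≠ w := by rintro rfl; exact hdi (h₁.center.symm.trans hri)
  exact hP.not_adj_of_adj_of_adj hG hvr hrw hxp hpu hpr.symm

theorem IsThreePath.exists_isRerouting (hP : IsThreePath G v w u x) (hG : NoShortCycles G)
    (hc : IsPartialColoring G k c) (hi : i < k) (hd : d < k) (hdi : d ≠ i) (hui : c u ≠ i)
    (hud : c u ≠ d) (hv : ∀ p, G.Adj v p → c p = i → HasSpareColor G k c v p)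
    (hw : ∀ p, G.Adj w p → c p = d → HasSpareColor G k c w p)
    (hx : ∀ p, G.Adj x p → c p = i → HasSpareColor G k c x p) :
    ∃ c', IsRerouting G k c i d v w x c' := by
  obtain ⟨c₁, h₁⟩ := hc.exists_isRecoloring hG.triangle hd hw
  obtain ⟨c₂, h₂⟩ := h₁.isPartialColoring.exists_isRecoloring hG.triangle hi fun _ ↦
    hP.hasSpareColor_of_isRecoloring hG hdi h₁ hv
  obtain ⟨c₃, h₃⟩ := h₂.isPartialColoring.exists_isRecoloring hG.triangle hi fun _ ↦
    hP.hasSpareColor_of_isRecoloring_of_isRecoloring hG hdi hui hud h₁ h₂ hx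
  refine ⟨c₃, h₃.isPartialColoring,
    h₃.uncolored_subset.trans (h₂.uncolored_subset.trans h₁.uncolored_subset), ?_, ?_, h₃.center,
    ?_⟩
  · rw [h₃.eq_of_ne (by rintro rfl; exact hP.not_adj_of_adj hG hP.adj_vw hP.adj_vw)
      fun h ↦ absurd h.symm (hP.not_adj hG), h₂.center]
  · rw [h₃.eq_of_ne hP.ne_wx fun h ↦ absurd h (hP.not_adj_of_adj hG hP.adj_vw),
      h₂.eq_of_ne hP.adj_vw.ne' fun _ ↦ h₁.center ▸ hdi, h₁.center]
  · intro p hpv hpw hpx hvp hwp hxp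
    have e₁ := h₁.eq_of_ne hpw hwp
    have e₂ := (h₂.eq_of_ne hpv (e₁ ▸ hvp)).trans e₁
    exact (h₃.eq_of_ne hpx (e₂ ▸ hxp)).trans e₂

namespace IsRerouting

theorem isLargeBVertex_of_mem_path (h : IsRerouting G k c i d v w x c')
    (hP : IsThreePath G v w u x) (hG : NoShortCycles G) (hui : c u ≠ i) (hud : c u ≠ d)
    (hw : c w = i) (hu : IsLargeBVertex G k c u)
    (hz : ∀ m < k, m ≠ c u → m ≠ i → m = d ∨ ∃ z, G.Adj u z ∧ z ≠ x ∧ c z = m) :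
    c' u = c u ∧ IsLargeBVertex G k c' u := by
  have hvu : ¬ G.Adj v u := fun hvu ↦ hG.triangle hvu hP.adj_wu.symm hP.adj_vw.symm
  have hcu : c' u = c u :=
    h.eq_of_ne hP.ne_vu.symm hP.adj_wu.ne' hP.adj_ux.ne (fun _ ↦ hui) (fun _ ↦ hud) fun _ ↦ hui
  refine ⟨hcu, hu.of_forall_adj hcu fun m _ hmk hmu ↦ ?_⟩
  by_cases hmi : c m = i
  · exact ⟨x, hP.adj_ux, h.color_x.trans hmi.symm⟩
  rcases hz _ hmk hmu hmi with hmd | ⟨z, huz, hzx, hzm⟩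
  · exact ⟨w, hP.adj_wu.symm, h.color_w.trans hmd.symm⟩
  · have hzi : c z ≠ i := hzm ▸ hmi
    refine ⟨z, huz, (h.eq_of_ne ?_ ?_ hzx (fun _ ↦ hzi) ?_ fun _ ↦ hzi).trans hzm⟩
    · rintro rfl; exact hvu huz.symm
    · rintro rfl; exact hzi hw
    · exact fun hwz ↦ (hG.triangle hwz huz.symm hP.adj_wu.symm).elim

theorem isLargeBVertex_of_adj (h : IsRerouting G k c i d v w x c')
    (hP : IsThreePath G v w u x) (hG : NoShortCycles G) (hv : k ≤ c v) {p : V}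
    (hvp : G.Adj v p) (hpw : p ≠ w) (hpi : c p ≠ i) (hp : IsLargeBVertex G k c p) :
    c' p = c p ∧ IsLargeBVertex G k c' p := by
  have hwp : ¬ G.Adj w p := fun h ↦ hG.triangle hP.adj_vw h hvp.symm
  have hpx : p ≠ x := by rintro rfl; exact hP.not_adj hG hvp
  have hcp : c' p = c p :=
    h.eq_of_ne hvp.ne' hpw hpx (fun _ ↦ hpi) (fun h ↦ absurd h hwp) fun _ ↦ hpi
  refine ⟨hcp, hp.of_forall_adj hcp fun z hpz hzk _ ↦ ⟨z, hpz, ?_⟩⟩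
  have hzv : z ≠ v := ne_of_lt_of_le_color hzk hv
  have hzu : z ≠ u := by
    rintro rfl
    exact hG.square hvp hpz hP.adj_wu.symm hP.adj_vw.symm hzv.symm hpw
  refine h.eq_of_ne hzv ?_ ?_ (fun hvz ↦ ?_) (fun hwz ↦ ?_) fun hxz ↦ ?_
  · rintro rfl; exact hwp hpz.symm
  · rintro rfl; exact hP.not_adj_of_adj hG hvp hpz.symm
  · exact (hG.triangle hvp hpz hvz.symm).elim
  · exact (hG.square hvp hpz hwz.symm hP.adj_vw.symm hzv.symm hpw).elim
  · exact (hP.not_adj_of_adj_of_adj hG hvp hpw hxz hzu hpz).elim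

theorem isLargeBVertex_of_adj_of_adj (h : IsRerouting G k c i d v w x c')
    (hP : IsThreePath G v w u x) (hG : NoShortCycles G) (hv : k ≤ c v) (hw : c w = i) {p w' : V}
    (hvw' : G.Adj v w') (hpw' : G.Adj p w') (hw' : c w' ≠ i) (hpv : p ≠ v) (hpu : p ≠ u)
    (hp : IsLargeBVertex G k c p)
    (hs : c p ≠ i → ∃ s, G.Adj p s ∧ c s = i ∧ ¬ G.Adj x s) :
    c' p = c p ∧ IsLargeBVertex G k c' p := by
  have hww' : w' ≠ w := by rintro rfl; exact hw' hw
  have hvp : ¬ G.Adj v p := fun h ↦ hG.triangle h hpw' hvw'.symm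
  have hwp : ¬ G.Adj w p := fun h ↦
    hG.square hP.adj_vw h hpw' hvw'.symm hpv.symm hww'.symm
  have hxp : ¬ G.Adj x p := fun h ↦
    hP.not_adj_of_adj_of_adj hG hvw' hww' h hpu hpw'.symm
  have hcp : c' p = c p := h.eq_of_ne hpv (by rintro rfl; exact hvp hP.adj_vw)
    (by rintro rfl; exact hP.not_adj_of_adj hG hvw' hpw') (fun h ↦ absurd h hvp)
    (fun h ↦ absurd h hwp) fun h ↦ absurd h hxp
  have color_neighbor : ∀ z, G.Adj p z → c z < k → (c z = i → ¬ G.Adj x z) → c' z = c z := by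
    intro z hpz hzk hxz
    refine h.eq_of_ne (ne_of_lt_of_le_color hzk hv) ?_ ?_ (fun hvz hzi ↦ ?_) (fun hwz ↦ ?_)
      fun h hzi ↦ hxz hzi h
    · rintro rfl; exact hwp hpz.symm
    · rintro rfl; exact hxp hpz.symm
    · have hzw' : z ≠ w' := by rintro rfl; exact hw' hzi
      exact hG.square hvz hpz.symm hpw' hvw'.symm hpv.symm hzw'
    · exact (hG.pentagon hP.adj_vw hwz hpz.symm hpw' hvw'.symm).elim
  refine ⟨hcp, hp.of_forall_adj hcp fun z hpz hzk hzp ↦ ?_⟩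
  by_cases hzi : c z = i
  · obtain ⟨s, hps, hsi, hxs⟩ := hs (hzi ▸ hzp.symm)
    exact ⟨s, hps, (color_neighbor s hps (by rwa [hsi, ← hzi]) fun _ ↦ hxs).trans
      (hsi.trans hzi.symm)⟩
  · exact ⟨z, hpz, color_neighbor z hpz hzk fun h ↦ absurd h hzi⟩

end IsRerouting

end Rerouting

section Blocking

variable {G : SimpleGraph V} {k i j d : ℕ} {c : V → ℕ} {v w u x : V}

/-- The colors that no large b-vertex adjacent to `v` has. -/
def missingColors (G : SimpleGraph V) (k : ℕ) (c : V → ℕ) (v : V) : Set ℕ :=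
  {i | i < k ∧ ∀ p, G.Adj v p → c p = i → ¬ IsLargeBVertex G k c p}

/-- The color `j` prevents `v` from receiving the color `i`: each of its large b-vertices sees the
color `i` only on neighbors of `v`, which would lose it. -/
def Blocks (G : SimpleGraph V) (k : ℕ) (c : V → ℕ) (v : V) (i j : ℕ) : Prop :=
  ∀ u, c u = j → IsLargeBVertex G k c u → ∀ w, G.Adj u w → c w = i → G.Adj v w

theorem exists_blocks (hG : NoShortCycles G)
    (hc : MinimalFor (IsPartialBColoring G k) (uncolored k) c) (hv : k ≤ c v)
    (hi : i ∈ missingColors G k c v) : ∃ j < k, j ≠ i ∧ Blocks G k c v i j := by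
  by_contra! h
  simp only [Blocks, not_forall] at h
  obtain ⟨c', hc'⟩ := hc.1.1.exists_isRecoloring hG.triangle hi.1 fun p hvp hp ↦
    hasSpareColor_of_not_isLargeBVertex hvp.symm (hi.2 p hvp hp)
  have color_of_ne : ∀ p, c p < k → c p ≠ i → c' p = c p := fun p hpk hpi ↦
    hc'.eq_of_ne (ne_of_lt_of_le_color hpk hv) fun _ ↦ hpi
  refine (hc.2 ⟨hc'.isPartialColoring, fun l hl ↦ ?_⟩ hc'.uncolored_subset hv).not_gt
    (hc'.center ▸ hi.1)
  by_cases hli : l = i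
  · subst hli
    obtain ⟨p, rfl, hp⟩ := hc.1.2 l hl
    have hcp : c' p = c p := hc'.eq_of_ne (ne_of_lt_of_le_color hl hv) fun hvp ↦
      absurd hp (hi.2 p hvp rfl)
    exact ⟨p, hcp, hp.of_forall_adj hcp fun z hpz hzk hzp ↦ ⟨z, hpz, color_of_ne z hzk hzp⟩⟩
  · obtain ⟨p, rfl, hp, s, hps, rfl, hvs⟩ := h l hl hli
    refine ⟨p, color_of_ne p hl hli, hp.of_forall_adj (color_of_ne p hl hli) fun z hpz hzk _ ↦ ?_⟩
    by_cases hzs : c z = c s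
    · exact ⟨s, hps, (hc'.eq_of_ne (ne_of_lt_of_le_color hi.1 hv) fun h ↦ absurd h hvs).trans
        hzs.symm⟩
    · exact ⟨z, hpz, color_of_ne z hzk hzs⟩

namespace Blocks

theorem exists_adj (h : Blocks G k c v i j) (hi : i < k) (hji : j ≠ i) (hu : c u = j)
    (hbu : IsLargeBVertex G k c u) : ∃ w, G.Adj v w ∧ G.Adj u w ∧ c w = i := by
  obtain ⟨w, huw, hw⟩ := hbu.2 i hi (hu ▸ hji.symm)
  exact ⟨w, h u hu hbu w huw hw, huw, hw⟩

theorem mem_missingColors (h : Blocks G k c v i j) (hG : NoShortCycles G) (hi : i < k) (hj : j < k)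
    (hji : j ≠ i) : j ∈ missingColors G k c v := by
  refine ⟨hj, fun u hvu hu hbu ↦ ?_⟩
  obtain ⟨w, hvw, huw, -⟩ := h.exists_adj hi hji hu hbu
  exact hG.triangle hvu huw hvw.symm

theorem eq_of_adj (h : Blocks G k c v i j) (hG : NoShortCycles G) (hvu : v ≠ u) (hu : c u = j)
    (hbu : IsLargeBVertex G k c u) (huw : G.Adj u w) (hw : c w = i) {w' : V} (hvw' : G.Adj v w')
    (huw' : G.Adj u w') : w' = w := by
  by_contra hne
  exact hG.square hvw' huw'.symm huw (h u hu hbu w huw hw).symm hvu hne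

end Blocks

theorem exists_bijOn_blocks (hG : NoShortCycles G)
    (hc : MinimalFor (IsPartialBColoring G k) (uncolored k) c) (hv : k ≤ c v) :
    ∃ σ : ℕ → ℕ, Set.BijOn σ (missingColors G k c v) (missingColors G k c v) ∧
      ∀ i ∈ missingColors G k c v, σ i ≠ i ∧ Blocks G k c v i (σ i) := by
  have exists_blocking : ∀ i ∈ missingColors G k c v, ∃ j < k, j ≠ i ∧ Blocks G k c v i j :=
    fun i hi ↦ exists_blocks hG hc hv hi
  choose! σ hσk hσne hσ using exists_blocking
  have hmaps : Set.MapsTo σ (missingColors G k c v) (missingColors G k c v) := fun i hi ↦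
    (hσ i hi).mem_missingColors hG hi.1 (hσk i hi) (hσne i hi)
  have hfin : (missingColors G k c v).Finite := (Set.finite_Iio k).subset fun _ ↦ And.left
  refine ⟨σ, (hfin.injOn_iff_bijOn_of_mapsTo hmaps).1 fun i hi i' hi' hii' ↦ ?_,
    fun i hi ↦ ⟨hσne i hi, hσ i hi⟩⟩
  obtain ⟨u, hu, hbu⟩ := hc.1.2 _ (hσk i hi)
  obtain ⟨w, -, huw, rfl⟩ := (hσ i hi).exists_adj hi.1 (hσne i hi) hu hbu
  obtain ⟨w', hvw', huw', rfl⟩ :=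
    (hσ i' hi').exists_adj hi'.1 (hσne i' hi') (hu.trans hii') hbu
  have hvu : v ≠ u := (ne_of_lt_of_le_color (hu ▸ hσk _ hi) hv).symm
  rw [(hσ _ hi).eq_of_adj hG hvu hu hbu huw rfl hvw' huw']

/-- The situation around `v` when `j` blocks the missing color `i`: a large b-vertex `u` of color
`j` and its only neighbor `w` of color `i`. Since blocking permutes the missing colors, a large
b-vertex of a missing color other than `j` is joined to `v` through a color other than `i`. -/
structure IsBlockedPath (G : SimpleGraph V) (k : ℕ) (c : V → ℕ) (i j : ℕ) (v w u : V) : Prop where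
  mem_i : i ∈ missingColors G k c v
  mem_j : j ∈ missingColors G k c v
  ne : j ≠ i
  color_u : c u = j
  large : IsLargeBVertex G k c u
  adj_vw : G.Adj v w
  adj_uw : G.Adj u w
  color_w : c w = i
  eq_w : ∀ ⦃w'⦄, G.Adj u w' → c w' = i → w' = w
  detour : ∀ ⦃p⦄, IsLargeBVertex G k c p → c p ∈ missingColors G k c v → c p ≠ j →
    ∃ w', G.Adj v w' ∧ G.Adj p w' ∧ c w' ≠ i

theorem exists_isBlockedPath (hG : NoShortCycles G)
    (hc : MinimalFor (IsPartialBColoring G k) (uncolored k) c) (hv : k ≤ c v)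
    (hi : i ∈ missingColors G k c v) : ∃ j w u, IsBlockedPath G k c i j v w u := by
  obtain ⟨σ, hbij, hσ⟩ := exists_bijOn_blocks hG hc hv
  have hmem := hbij.mapsTo hi
  obtain ⟨hne, hblocks⟩ := hσ i hi
  obtain ⟨u, hu, hbu⟩ := hc.1.2 _ hmem.1
  obtain ⟨w, hvw, huw, hw⟩ := hblocks.exists_adj hi.1 hne hu hbu
  have hvu : v ≠ u := (ne_of_lt_of_le_color (hu ▸ hmem.1) hv).symm
  refine ⟨σ i, w, u, hi, hmem, hne, hu, hbu, hvw, huw, hw, fun w' huw' hw' ↦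
    hblocks.eq_of_adj hG hvu hu hbu huw hw (hblocks u hu hbu w' huw' hw') huw', ?_⟩
  intro p hp hpmem hpj
  obtain ⟨i', hi', hpi'⟩ := hbij.surjOn hpmem
  have hii' : i' ≠ i := by rintro rfl; exact hpj hpi'.symm
  obtain ⟨w', hvw', hpw', hw'⟩ := (hσ i' hi').2.exists_adj hi'.1 (hσ i' hi').1 hpi'.symm hp
  exact ⟨w', hvw', hpw', hw'.trans_ne hii'⟩

/-- A neighbor `x` of `u` that can take over the color `i` from `w`: the color of `x` itself can be
restored around `u`, and giving `x` the color `i` deprives no missing color of all its large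
b-vertices. -/
structure IsPivot (G : SimpleGraph V) (k : ℕ) (c : V → ℕ) (i j : ℕ) (v w u x : V) : Prop where
  adj : G.Adj u x
  ne : x ≠ w
  dispensable : k ≤ c x ∨ c x ∈ missingColors G k c v ∨ ∃ x' ≠ x, G.Adj u x' ∧ c x' = c x
  exists_not_adj : ∀ l ∈ missingColors G k c v, l ≠ i → l ≠ j →
    ∃ p s, c p = l ∧ IsLargeBVertex G k c p ∧ G.Adj p s ∧ c s = i ∧ ¬ G.Adj x s

/-- A color `d` that can replace the color `i` of `w`: no large b-vertex is moved, and `u` keeps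
seeing all colors but possibly `i` even without the color of `x`. -/
structure IsSubstitute (G : SimpleGraph V) (k : ℕ) (c : V → ℕ) (i j : ℕ) (w u x : V) (d : ℕ) :
    Prop where
  lt : d < k
  ne_i : d ≠ i
  ne_j : d ≠ j
  not_large : ∀ ⦃t⦄, G.Adj w t → c t = d → ¬ IsLargeBVertex G k c t
  eq_or_exists_adj : ∀ m < k, m ≠ j → m ≠ i → m = d ∨ ∃ z, G.Adj u z ∧ z ≠ x ∧ c z = m

namespace IsBlockedPath

theorem ne_vu (h : IsBlockedPath G k c i j v w u) (hv : k ≤ c v) : v ≠ u :=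
  (ne_of_lt_of_le_color (h.color_u ▸ h.mem_j.1) hv).symm

theorem isThreePath (h : IsBlockedPath G k c i j v w u) (hv : k ≤ c v)
    (hx : IsPivot G k c i j v w u x) : IsThreePath G v w u x :=
  ⟨h.adj_vw, h.adj_uw.symm, hx.adj, h.ne_vu hv, hx.ne.symm⟩

/- Each of the fewer than `deg u` colors other than `j` rules out at most one neighbor of `u`: a
missing color `m ≠ i` the common neighbor with some `s` as in `exists_not_adj`, any other color the
neighbor that is the only one to have it; for `m = i` this is `w`. -/
theorem exists_isPivot (h : IsBlockedPath G k c i j v w u) (hG : NoShortCycles G)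
    (hc : IsPartialBColoring G k c) : ∃ x, IsPivot G k c i j v w u x := by
  set I := missingColors G k c v
  let separates (m : ℕ) (p s : V) : Prop :=
    c p = m ∧ IsLargeBVertex G k c p ∧ G.Adj p s ∧ c s = i
  have exists_separates : ∀ m ∈ I, m ≠ i → ∃ p s, separates m p s := by
    intro m hm hmi
    obtain ⟨p, rfl, hp⟩ := hc.2 m hm.1
    obtain ⟨s, hps, hs⟩ := hp.2 i h.mem_i.1 hmi.symm
    exact ⟨p, s, rfl, hp, hps, hs⟩
  let R (x : V) (m : ℕ) : Prop :=
    (m ∈ I \ {i} ∧ ∀ p s, separates m p s → G.Adj x s) ∨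
      (m ∉ I \ {i} ∧ c x = m ∧ ∀ x', G.Adj u x' → c x' = m → x' = x)
  have hcard : (Set.Iio k \ {j}).encard < (G.neighborSet u).encard :=
    calc (Set.Iio k \ {j}).encard < (Set.Iio k).encard :=
          (Set.finite_Iio k).sdiff.encard_lt_encard (Set.sdiff_singleton_ssubset.2 h.mem_j.1)
      _ = k := encard_Iio_nat k
      _ ≤ (G.neighborSet u).encard := h.large.1
  obtain ⟨x, hux, hx⟩ := exists_forall_not_of_encard_lt hcard R fun m _ a ha a' ha' hRa hRa' ↦ by
    rcases hRa with ⟨hm, hRa⟩ | ⟨hm, ham, -⟩ <;> rcases hRa' with ⟨hm', hRa'⟩ | ⟨hm', -, hRa'⟩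
    · obtain ⟨p, s, hps⟩ := exists_separates m hm.1 hm.2
      by_contra hne
      refine hG.square ha (hRa p s hps) (hRa' p s hps).symm ha'.symm ?_ hne
      rintro rfl
      exact h.ne (h.color_u.symm.trans hps.2.2.2)
    · exact absurd hm hm'
    · exact absurd hm' hm
    · exact hRa' a ha ham
  have hcx : c x < k → c x ≠ j := fun hxk ↦ h.color_u ▸ hc.1 hux.symm hxk
  refine ⟨x, hux, ?_, ?_, fun l hl hli hlj ↦ ?_⟩
  · rintro rfl
    exact hx i ⟨h.mem_i.1, h.ne.symm⟩ (Or.inr ⟨by simp, h.color_w, h.eq_w⟩)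
  · by_contra! hdisp
    exact hx (c x) ⟨hdisp.1, hcx hdisp.1⟩ (Or.inr ⟨fun hm ↦ hdisp.2.1 hm.1, rfl,
      fun x' hux' hx' ↦ by_contra fun hne ↦ hdisp.2.2 x' hne hux' hx'⟩)
  · by_contra! hno
    exact hx l ⟨hl.1, hlj⟩ (Or.inl ⟨⟨hl, hli⟩, fun p s hps ↦
      hno p s hps.1 hps.2.1 hps.2.2.1 hps.2.2.2⟩)

theorem exists_isSubstitute (h : IsBlockedPath G k c i j v w u) (hG : NoShortCycles G)
    (hc : IsPartialColoring G k c) (hv : k ≤ c v) (hx : IsPivot G k c i j v w u x) :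
    ∃ d, IsSubstitute G k c i j w u x d := by
  have exists_adj : ∀ m < k, m ≠ j → ∃ z, G.Adj u z ∧ c z = m := fun m hm hmj ↦
    h.large.2 m hm (h.color_u ▸ hmj)
  by_cases hxI : c x ∈ missingColors G k c v
  · have hxj : c x ≠ j := h.color_u ▸ hc hx.adj.symm hxI.1
    refine ⟨c x, hxI.1, fun hxi ↦ hx.ne (h.eq_w hx.adj hxi), hxj, fun t hwt htx ht ↦ ?_, ?_⟩
    · obtain ⟨w', hvw', htw', hw'⟩ := h.detour ht (htx ▸ hxI) (htx ▸ hxj)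
      have htv : t ≠ v := ne_of_lt_of_le_color (htx ▸ hxI.1) hv
      exact hG.square h.adj_vw hwt htw' hvw'.symm htv.symm
        (by rintro rfl; exact hw' h.color_w)
    · intro m hm hmj _
      refine or_iff_not_imp_left.2 fun hmx ↦ ?_
      obtain ⟨z, huz, hz⟩ := exists_adj m hm hmj
      exact ⟨z, huz, by rintro rfl; exact hmx hz.symm, hz⟩
  · obtain ⟨d, hdk, hdw, hd⟩ := hasSpareColor_of_not_isLargeBVertex h.adj_vw.symm
      (h.mem_i.2 w h.adj_vw h.color_w)
    refine ⟨d, hdk, h.color_w ▸ hdw, ?_, fun t hwt htd ↦ ?_, fun m hm hmj _ ↦ Or.inr ?_⟩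
    · rintro rfl
      exact hd u h.adj_uw.symm (h.ne_vu hv).symm h.color_u
    · exact (hd t hwt (ne_of_lt_of_le_color (htd ▸ hdk) hv) htd).elim
    · obtain ⟨z, huz, rfl⟩ := exists_adj m hm hmj
      rcases eq_or_ne z x with rfl | hzx
      · obtain ⟨x', hx'z, hux', hx'⟩ := (hx.dispensable.resolve_left hm.not_ge).resolve_left hxI
        exact ⟨x', hux', hx'z, hx'⟩
      · exact ⟨z, huz, hzx, rfl⟩

theorem exists_isRerouting (h : IsBlockedPath G k c i j v w u) (hG : NoShortCycles G)
    (hc : IsPartialColoring G k c) (hv : k ≤ c v) (hx : IsPivot G k c i j v w u x)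
    (hd : IsSubstitute G k c i j w u x d) : ∃ c', IsRerouting G k c i d v w x c' := by
  have hP := h.isThreePath hv hx
  refine hP.exists_isRerouting hG hc h.mem_i.1 hd.lt hd.ne_i (h.color_u ▸ h.ne)
    (h.color_u ▸ hd.ne_j.symm)
    (fun p hvp hp ↦ hasSpareColor_of_not_isLargeBVertex hvp.symm (h.mem_i.2 p hvp hp))
    (fun p hwp hp ↦ hasSpareColor_of_not_isLargeBVertex hwp.symm (hd.not_large hwp hp))
    fun p hxp hp ↦ hasSpareColor_of_not_isLargeBVertex hxp.symm fun hbp ↦ ?_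
  obtain ⟨w', hvw', hpw', hw'⟩ := h.detour hbp (hp ▸ h.mem_i) (hp ▸ h.ne.symm)
  exact hP.not_adj_of_adj_of_adj hG hvw' (by rintro rfl; exact hw' h.color_w) hxp
    (by rintro rfl; exact h.ne (h.color_u.symm.trans hp)) hpw'.symm

theorem isPartialBColoring_of_isRerouting (h : IsBlockedPath G k c i j v w u)
    (hG : NoShortCycles G) (hc : IsPartialBColoring G k c) (hv : k ≤ c v)
    (hx : IsPivot G k c i j v w u x) (hd : IsSubstitute G k c i j w u x d) {c' : V → ℕ}
    (hc' : IsRerouting G k c i d v w x c') : IsPartialBColoring G k c' := by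
  have hP := h.isThreePath hv hx
  suffices survives : ∀ l < k, ∃ p, c p = l ∧ c' p = c p ∧ IsLargeBVertex G k c' p from
    ⟨hc'.isPartialColoring, fun l hl ↦
      (survives l hl).imp fun _ hp ↦ ⟨hp.2.1.trans hp.1, hp.2.2⟩⟩
  intro l hl
  rcases eq_or_ne l j with rfl | hlj
  · exact ⟨u, h.color_u, hc'.isLargeBVertex_of_mem_path hP hG (h.color_u ▸ h.ne)
      (h.color_u ▸ hd.ne_j.symm) h.color_w h.large (by simpa [h.color_u] using hd.eq_or_exists_adj)⟩
  by_cases hlI : l ∈ missingColors G k c v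
  · obtain ⟨p, hpl, hp, hs⟩ : ∃ p, c p = l ∧ IsLargeBVertex G k c p ∧
        (c p ≠ i → ∃ s, G.Adj p s ∧ c s = i ∧ ¬ G.Adj x s) := by
      rcases eq_or_ne l i with rfl | hli
      · obtain ⟨p, hpl, hp⟩ := hc.2 l hl
        exact ⟨p, hpl, hp, fun hne ↦ absurd hpl hne⟩
      · obtain ⟨p, s, hpl, hp, hs⟩ := hx.exists_not_adj l hlI hli hlj
        exact ⟨p, hpl, hp, fun _ ↦ ⟨s, hs⟩⟩
    subst hpl
    obtain ⟨w', hvw', hpw', hw'⟩ := h.detour hp hlI hlj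
    exact ⟨p, rfl, hc'.isLargeBVertex_of_adj_of_adj hP hG hv h.color_w hvw' hpw' hw'
      (ne_of_lt_of_le_color hl hv) (by rintro rfl; exact hlj h.color_u) hp hs⟩
  · have hli : l ≠ i := by rintro rfl; exact hlI h.mem_i
    simp only [missingColors, Set.mem_ofPred_eq, not_and, not_forall, not_not] at hlI
    obtain ⟨p, hvp, rfl, hp⟩ := hlI hl
    exact ⟨p, rfl, hc'.isLargeBVertex_of_adj hP hG hv hvp
      (by rintro rfl; exact hli h.color_w) hli hp⟩

end IsBlockedPath

theorem missingColors_eq_empty (hG : NoShortCycles G)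
    (hc : MinimalFor (IsPartialBColoring G k) (uncolored k) c) (hv : k ≤ c v) :
    missingColors G k c v = ∅ := by
  by_contra hne
  obtain ⟨i, hi⟩ := Set.nonempty_iff_ne_empty.2 hne
  obtain ⟨j, w, u, h⟩ := exists_isBlockedPath hG hc hv hi
  obtain ⟨x, hx⟩ := h.exists_isPivot hG hc.1
  obtain ⟨d, hd⟩ := h.exists_isSubstitute hG hc.1.1 hv hx
  obtain ⟨c', hc'⟩ := h.exists_isRerouting hG hc.1.1 hv hx hd
  have hc'v : k ≤ c' v := hc.2 (h.isPartialBColoring_of_isRerouting hG hc.1 hv hx hd hc')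
    hc'.uncolored_subset hv
  exact hc'v.not_gt (hc'.color_v ▸ hi.1)

end Blocking

section Main

variable {G : SimpleGraph V} {k n : ℕ}

theorem exists_isBColoring_of_isPartialBColoring [Finite V] (hG : NoShortCycles G)
    (f : G.Coloring (Fin n)) (hn : 2 * n ≤ k) (hc : ∃ c, IsPartialBColoring G k c) :
    ∃ c : V → ℕ, IsBColoring G k c := by
  obtain ⟨c, hc⟩ := exists_minimalFor_of_wellFoundedLT _ (uncolored k) hc
  by_cases hlt : ∀ v, c v < k
  · exact ⟨c, hc.1.isBColoring hlt⟩
  push Not at hlt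
  obtain ⟨v, hv⟩ := hlt
  refine exists_isBColoring_of_neighbors hG f hn hc.1.1 hv fun i hi ↦ ?_
  have hmem : i ∉ missingColors G k c v := by simp [missingColors_eq_empty hG hc hv]
  simp only [missingColors, Set.mem_ofPred_eq, not_and, not_forall, not_not] at hmem
  obtain ⟨y, hvy, hy, hby⟩ := hmem hi
  exact ⟨y, hvy, hy, hby.2⟩

theorem exists_isBColoring_bChrom [Fintype V] (h : bChrom G ≠ 0) :
    ∃ c : V → ℕ, IsBColoring G (bChrom G) c := by
  refine Nat.sSup_mem (s := {k | ∃ c : V → ℕ, IsBColoring G k c})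
    (Set.nonempty_iff_ne_empty.2 fun hempty ↦ h ?_) ⟨Fintype.card V, ?_⟩
  · simp [bChrom, hempty]
  · rintro K ⟨c, ⟨-, -, hsurj⟩, -⟩
    have hsub : Finset.range K ⊆ Finset.univ.image c := fun i hi ↦ by
      simpa using hsurj i (Finset.mem_range.1 hi)
    simpa using (Finset.card_le_card hsub).trans Finset.card_image_le

theorem exists_isPartialBColoring_of_lt_bChrom [Fintype V] (hk : k < bChrom G) :
    ∃ c : V → ℕ, IsPartialBColoring G k c :=
  (exists_isBColoring_bChrom (by omega)).imp fun _ hc ↦ hc.isPartialBColoring hk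

theorem exists_coloring_fin_of_two_mul_chromaticNumber_le (h : 2 * G.chromaticNumber ≤ (k : ℕ∞)) :
    ∃ n, 2 * n ≤ k ∧ Nonempty (G.Coloring (Fin n)) := by
  have htop : G.chromaticNumber ≠ ⊤ := by
    rintro htop
    simp [htop] at h
  obtain ⟨n, hn⟩ := ENat.ne_top_iff_exists.1 htop
  exact ⟨n, by rw [← hn] at h; exact_mod_cast h, chromaticNumber_le_iff_colorable.1 hn.ge⟩

end Main

/-- If `G` has girth at least 7, then every integer `k` with `2χ(G) ≤ k ≤ b(G)` is in the
b-spectrum of `G`. -/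
theorem bColoring_of_seven_le_girth [Fintype V] (G : SimpleGraph V)
    (hg : (7 : ℕ∞) ≤ G.egirth) (k : ℕ)
    (h1 : 2 * G.chromaticNumber ≤ (k : ℕ∞)) (h2 : k ≤ bChrom G) :
    ∃ c : V → ℕ, IsBColoring G k c := by
  obtain ⟨n, hn, ⟨f⟩⟩ := exists_coloring_fin_of_two_mul_chromaticNumber_le h1
  rcases h2.lt_or_eq with hlt | rfl
  · exact exists_isBColoring_of_isPartialBColoring (noShortCycles_of_seven_le_egirth hg) f hn
      (exists_isPartialBColoring_of_lt_bChrom hlt)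
  rcases eq_or_ne (bChrom G) 0 with h0 | h0
  · rw [h0] at hn ⊢
    have hV : IsEmpty V := ⟨fun v ↦ by have := (f v).isLt; omega⟩
    exact ⟨0, by simp [IsBColoring, IsProperKColoring]⟩
  · exact exists_isBColoring_bChrom h0
end

section
/- Let G be a graph with girth at least 7. If G admits a b-coloring with k colors where k ≥ χ(G)+1, then either G admits a b-coloring with k-1 colors, or G contains a (k-1)-iris. -/
open SimpleGraph

variable {V : Type*}

/-- `u` is a `k`-iris: `u` has at least `k-1` neighbors, each of degree at least `k-1`. -/
def IsIris [Fintype V] (G : SimpleGraph V) [DecidableRel G.Adj] (k : ℕ) (u : V) : Prop :=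
  ∃ S : Finset V, (∀ v ∈ S, G.Adj u v) ∧ k - 1 ≤ S.card ∧ ∀ v ∈ S, k - 1 ≤ G.degree v

/-!
Fix a b-vertex `b i` of each color and try to delete a color `d`: keep the colors around the `b i`
with `i ≠ d`, and recolor everything else greedily. Without a `(k - 1)`-iris every vertex has few
neighbors of high degree, so the only obstruction is a b-vertex `x` of color `d` that sees all other
colors on vertices already colored. By girth at least 7 each `b i` accounts for only one neighbor
of `x`, so counting makes `x` a hub: it has distinct neighbors, each equal or adjacent to its
own `b i`. Then `x` can replace `b d`, and the same attempt for a second color `d'` can only fail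
at a second hub, which together with the first one would close a cycle of length at most 6.
-/

variable {α ι : Type*} {G : SimpleGraph V}

theorem exists_mem_forall_ne_of_encard_lt {s : Set V} {t : Set α} (f : V → α)
    (h : s.encard < t.encard) : ∃ a ∈ t, ∀ v ∈ s, f v ≠ a := by
  by_contra! hall
  exact h.not_ge ((Set.encard_le_encard hall).trans (Set.encard_image_le f s))

theorem encard_compl_singleton {n : ℕ} (hα : Nat.card α = n + 1) (a : α) :
    ({a}ᶜ : Set α).encard = n := by
  have : Finite α := Nat.finite_of_card_ne_zero (hα.trans_ne n.succ_ne_zero)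
  have h := Set.encard_add_encard_compl ({a} : Set α)
  rw [Set.encard_singleton, Set.encard_univ, ENat.card_eq_coe_natCard, hα, add_comm,
    Nat.cast_add_one] at h
  exact (ENat.add_left_injective_of_ne_top ENat.one_ne_top) h

theorem card_subtype_ne {n : ℕ} (hα : Nat.card α = n + 1) (a : α) :
    Nat.card {i // i ≠ a} = n := by
  have h : Nat.card {i // i ≠ a} = ({a}ᶜ : Set α).ncard := Nat.card_coe_set_eq _
  rw [h, Set.ncard_def, encard_compl_singleton hα, ENat.toNat_natCast]

section Girth

theorem notMem_support_deleteIncidenceSet_walk {x y z : V}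
    (w : (G.deleteIncidenceSet x).Walk y z) (hz : z ≠ x) : x ∉ w.support := by
  rw [Walk.mem_support_iff_exists_mem_edges]
  rintro (rfl | ⟨e, he, hxe⟩)
  · exact hz rfl
  · have he' := w.edges_subset_edgeSet he
    rw [edgeSet_deleteIncidenceSet] at he'
    exact he'.2 ⟨he'.1, hxe⟩

theorem egirth_le_edist_deleteIncidenceSet_add_two {x y z : V} (hy : G.Adj x y) (hz : G.Adj x z)
    (hyz : y ≠ z) : G.egirth ≤ (G.deleteIncidenceSet x).edist y z + 2 := by
  classical
  by_cases htop : (G.deleteIncidenceSet x).edist y z = ⊤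
  · simp only [htop, top_add, le_top]
  obtain ⟨w, hw⟩ := exists_walk_of_edist_ne_top htop
  let p : G.Walk y z := w.bypass.mapLe (G.deleteIncidenceSet_le x)
  have hpath : p.IsPath := w.bypass_isPath.mapLe _
  have hx : x ∉ p.support := by
    rw [Walk.support_mapLe_eq_support]
    exact notMem_support_deleteIncidenceSet_walk _ hz.ne'
  have hcycle : (Walk.cons hz.symm (Walk.cons hy p)).IsCycle := by
    rw [Walk.cons_isCycle_iff, Walk.cons_isPath_iff, Walk.edges_cons, List.mem_cons]
    refine ⟨⟨hpath, hx⟩, ?_⟩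
    rintro (h | h)
    · grind [hz.ne]
    · exact hx (p.snd_mem_support_of_mem_edges h)
  have hlength : p.length ≤ w.length := by
    rw [Walk.length_mapLe]
    exact w.length_bypass_le_length
  calc G.egirth ≤ (p.length + 2 : ℕ) := egirth_le_length hcycle
    _ ≤ w.length + 2 := by exact_mod_cast Nat.add_le_add_right hlength 2
    _ = _ := by rw [hw]

theorem eq_of_adj_of_edist_deleteIncidenceSet_le_four (hg : 7 ≤ G.egirth) {x y z : V}
    (hy : G.Adj x y) (hz : G.Adj x z) (h : (G.deleteIncidenceSet x).edist y z ≤ 4) : y = z := by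
  by_contra hyz
  have hle := (hg.trans (egirth_le_edist_deleteIncidenceSet_add_two hy hz hyz)).trans
    (add_le_add_left h 2)
  exact absurd hle (by decide)

theorem edist_deleteIncidenceSet_le_one {x y z : V} (h : G.edist y z ≤ 1) (hy : y ≠ x)
    (hz : z ≠ x) : (G.deleteIncidenceSet x).edist y z ≤ 1 := by
  rw [edist_le_one_iff_adj_or_eq] at h ⊢
  exact h.imp_left fun h ↦ deleteIncidenceSet_adj.2 ⟨h, hy, hz⟩

end Girth

section Greedy

theorem exists_coloring_eqOn_of_encard_lt {s : Set V} {φ : V → α}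
    (hφ : s.Pairwise fun u v ↦ G.Adj u v → φ u ≠ φ v)
    (hs : ∀ v ∉ s, (G.neighborSet v).encard < ENat.card α) :
    ∃ C : G.Coloring α, s.EqOn C φ := by
  classical
  -- Color the vertices outside `s` greedily along a well-order of `V`.
  have hfree : ∀ v, ∀ g : V → α, ∃ a, v ∉ s → ∀ w, G.Adj v w → g w ≠ a := by
    intro v g
    by_cases hv : v ∈ s
    · exact ⟨φ v, fun h ↦ (h hv).elim⟩
    · obtain ⟨a, -, ha⟩ := exists_mem_forall_ne_of_encard_lt (t := Set.univ) g
        ((hs v hv).trans_eq (Set.encard_univ α).symm)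
      exact ⟨a, fun _ ↦ ha⟩
  choose a ha using hfree
  let r : V → V → Prop := WellOrderingRel
  let f : V → α := (IsWellFounded.wf (r := r)).fix fun v ih ↦
    if v ∈ s then φ v else a v fun w ↦ if h : r w v then ih w h else φ w
  have hf : ∀ v, f v = if v ∈ s then φ v else a v fun w ↦ if r w v then f w else φ w := by
    intro v
    simpa using! (IsWellFounded.wf (r := r)).fix_eq _ v
  have hfs : s.EqOn f φ := fun v hv ↦ by rw [hf v, if_pos hv]
  have hne : ∀ {u v}, G.Adj u v → u ∉ s → (v ∈ s ∨ r v u) → f u ≠ f v := by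
    intro u v huv hu hv
    have := ha u (fun w ↦ if r w u then f w else φ w) hu v huv
    rw [hf u, if_neg hu]
    grind
  refine ⟨Coloring.mk f fun {u v} huv ↦ ?_, hfs⟩
  by_cases hu : u ∈ s
  · by_cases hv : v ∈ s
    · rw [hfs hu, hfs hv]
      exact hφ hu hv huv.ne huv
    · exact (hne huv.symm hv (.inl hu)).symm
  · rcases trichotomous_of r u v with h | rfl | h
    · by_cases hv : v ∈ s
      · exact hne huv hu (.inl hv)
      · exact (hne huv.symm hv (.inr h)).symm
    · exact (huv.ne rfl).elim
    · exact hne huv hu (.inr h)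

/-- The vertices of degree at least `m`, where an infinite degree counts as `⊤`. -/
def highDegree (G : SimpleGraph V) (m : ℕ) : Set V := {v | m ≤ (G.neighborSet v).encard}

theorem exists_coloring_eqOn_of_few_highDegree {m : ℕ} (hα : ENat.card α = m + 1)
    (hD : ∀ v, (G.neighborSet v ∩ highDegree G m).encard < m) {s : Set V} {φ : V → α}
    (hφ : s.Pairwise fun u v ↦ G.Adj u v → φ u ≠ φ v)
    (hs : ∀ v ∈ highDegree G m \ s, (G.neighborSet v ∩ (s \ highDegree G m)).Subsingleton) :
    ∃ C : G.Coloring α, s.EqOn C φ := by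
  -- Coloring `highDegree G m` first leaves only vertices with fewer neighbors than colors.
  let t := s ∪ highDegree G m
  let H := (G.induce t).spanningCoe
  have hH : ∀ {u v}, H.Adj u v ↔ G.Adj u v ∧ u ∈ t ∧ v ∈ t := by
    simp [H]
  obtain ⟨C₁, hC₁⟩ : ∃ C : H.Coloring α, s.EqOn C φ := by
    refine exists_coloring_eqOn_of_encard_lt
      (fun u hu v hv huv h ↦ hφ hu hv huv (hH.1 h).1) fun v hv ↦ ?_
    rw [hα]
    by_cases hvt : v ∈ t
    · have hsub : H.neighborSet v ⊆ (G.neighborSet v ∩ highDegree G m) ∪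
          (G.neighborSet v ∩ (s \ highDegree G m)) := by
        intro w hw
        have := hH.1 hw
        grind [mem_neighborSet]
      have hone := Set.encard_le_one_iff_subsingleton.2 (hs v ⟨hvt.resolve_left hv, hv⟩)
      calc (H.neighborSet v).encard
          ≤ (G.neighborSet v ∩ highDegree G m).encard +
            (G.neighborSet v ∩ (s \ highDegree G m)).encard :=
              (Set.encard_le_encard hsub).trans (Set.encard_union_le _ _)
        _ < m + 1 := ENat.add_lt_add_of_lt_of_le (hone.trans_lt ENat.one_lt_top).ne (hD v) hone
    · have : H.neighborSet v = ∅ := Set.eq_empty_of_forall_notMem fun w hw ↦ hvt (hH.1 hw).2.1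
      rw [this, Set.encard_empty]
      simp
  obtain ⟨C₂, hC₂⟩ := exists_coloring_eqOn_of_encard_lt (s := t) (φ := C₁)
    (fun u hu v hv _ h ↦ C₁.valid (hH.2 ⟨h, hu, hv⟩)) fun v hv ↦ by
      have hlow : (G.neighborSet v).encard < m := not_le.1 fun h ↦ hv (.inr h)
      rw [hα]
      exact hlow.trans (by exact_mod_cast m.lt_succ_self)
  exact ⟨C₂, fun v hv ↦ (hC₂ (.inl hv)).trans (hC₁ hv)⟩

end Greedy

section BSystem

/-- The notion of b-vertex for a coloring with an arbitrary type of colors. -/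
def IsBVertexOf (C : G.Coloring α) (u : V) : Prop := ∀ j ≠ C u, ∃ w, G.Adj u w ∧ C w = j

/-- `b` picks a b-vertex in each color class of `C`; in particular `C` uses every color. -/
def IsBSystem (C : G.Coloring α) (b : α → V) : Prop := ∀ i, C (b i) = i ∧ IsBVertexOf C (b i)

theorem IsBColoring.exists_isBSystem {k : ℕ} {c : V → ℕ} (h : IsBColoring G k c) :
    ∃ (C : G.Coloring (Fin k)) (b : Fin k → V), IsBSystem C b := by
  obtain ⟨⟨hlt, hadj, -⟩, hb⟩ := h
  choose b hbc hb using hb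
  refine ⟨Coloring.mk (fun v ↦ ⟨c v, hlt v⟩) fun h ↦ by simpa using hadj _ _ h,
    fun i ↦ b i i.2, fun i ↦ ⟨Fin.ext (hbc i i.2), fun j hj ↦ ?_⟩⟩
  obtain ⟨w, hw, hwj⟩ := hb i i.2 j j.2 fun h ↦ hj (Fin.ext h)
  exact ⟨w, hw, Fin.ext hwj⟩

theorem IsBSystem.exists_isBColoring [Finite α] {C : G.Coloring α} {b : α → V}
    (h : IsBSystem C b) : ∃ c, IsBColoring G (Nat.card α) c := by
  let e := Finite.equivFin α
  have hcolor : ∀ i (hi : i < Nat.card α) v, C v = e.symm ⟨i, hi⟩ ↔ (e (C v) : ℕ) = i := by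
    intro i hi v
    rw [Equiv.eq_symm_apply, Fin.ext_iff]
  refine ⟨fun v ↦ e (C v), ⟨fun v ↦ (e (C v)).2, fun u v huv heq ↦ ?_, fun i hi ↦ ?_⟩,
    fun i hi ↦ ⟨b (e.symm ⟨i, hi⟩), (hcolor i hi _).1 (h _).1, fun j hj hji ↦ ?_⟩⟩
  · exact C.valid huv (e.injective (Fin.ext heq))
  · exact ⟨_, (hcolor i hi _).1 (h _).1⟩
  · obtain ⟨w, hw, hwj⟩ := (h (e.symm ⟨i, hi⟩)).2 (e.symm ⟨j, hj⟩)
      fun heq ↦ hji ((hcolor j hj _).1 heq.symm).symm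
    exact ⟨w, hw, (hcolor j hj w).1 hwj⟩

theorem IsBSystem.update [DecidableEq α] {C : G.Coloring α} {b : α → V} (h : IsBSystem C b) {x : V}
    (hx : IsBVertexOf C x) : IsBSystem C (Function.update b (C x) x) := by
  intro i
  obtain rfl | hi := eq_or_ne i (C x)
  · rw [Function.update_self]
    exact ⟨rfl, hx⟩
  · rw [Function.update_of_ne hi]
    exact h i

theorem IsBVertexOf.mem_highDegree {m : ℕ} (hα : Nat.card α = m + 1) {C : G.Coloring α} {u : V}
    (hu : IsBVertexOf C u) : u ∈ highDegree G m := by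
  by_contra hlow
  obtain ⟨j, hj, hne⟩ := exists_mem_forall_ne_of_encard_lt C
    ((not_le.1 hlow).trans_eq (encard_compl_singleton hα (C u)).symm)
  obtain ⟨w, hw, hwj⟩ := hu j hj
  exact hne w hw hwj

theorem highDegree_antitone (G : SimpleGraph V) : Antitone (highDegree G) :=
  fun _ _ hmn _ hv ↦ (Nat.cast_le (α := ℕ∞).2 hmn).trans hv

end BSystem

section DeleteColor

/-- The vertices whose color must survive the deletion of color `d` in order that each `b i` with
`i ≠ d` remain a b-vertex. -/
def protectedVertices (C : G.Coloring α) (b : α → V) (d : α) : Set V :=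
  {v | C v ≠ d ∧ ∃ i ≠ d, G.edist v (b i) ≤ 1}

/-- The vertices recolored first when color `d` is deleted: the protected ones, which keep their
color, and the vertices of degree at least `m` with two or more protected neighbors of smaller
degree, for which greedy coloring could run out of colors. -/
def precoloredVertices (C : G.Coloring α) (b : α → V) (d : α) (m : ℕ) : Set V :=
  protectedVertices C b d ∪ {v ∈ highDegree G m |
    (G.neighborSet v ∩ (protectedVertices C b d \ highDegree G m)).Nontrivial}

/-- `x` has distinct neighbors, one for each index `i`, equal or adjacent to the target `b i`. -/
def IsHub (G : SimpleGraph V) (b : ι → V) (x : V) : Prop :=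
  ∃ p : ι → V, p.Injective ∧ ∀ i, G.Adj x (p i) ∧ G.edist (p i) (b i) ≤ 1

variable {C : G.Coloring α} {b : α → V} {d : α} {m : ℕ}

theorem IsBSystem.of_eqOn_protectedVertices (hb : IsBSystem C b)
    (C' : G.Coloring {i // i ≠ d}) (hC' : ∀ v ∈ protectedVertices C b d, (C' v : α) = C v) :
    IsBSystem C' fun i ↦ b i := by
  intro i
  have hCb : C (b i) ≠ d := (hb i).1.trans_ne i.2
  have hi : C' (b i) = i :=
    Subtype.ext ((hC' _ ⟨hCb, i, i.2, by simp only [edist_self, zero_le]⟩).trans (hb i).1)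
  refine ⟨hi, fun j hj ↦ ?_⟩
  obtain ⟨w, hw, hwj⟩ := (hb i).2 j fun h ↦ hj (Subtype.ext (h.trans ((hb i).1.trans
    (congrArg Subtype.val hi.symm))))
  have hprot : w ∈ protectedVertices C b d :=
    ⟨hwj.trans_ne j.2, i, i.2, edist_le_one_iff_adj_or_eq.2 (.inl hw.symm)⟩
  exact ⟨w, hw, Subtype.ext ((hC' w hprot).trans hwj)⟩

theorem exists_pairwise_ne_of_forall_exists_missing (C : G.Coloring α) (d : α)
    [Nonempty {i // i ≠ d}] {s : Set V}
    (h : ∀ x ∈ s, C x = d → ∃ e ≠ d, ∀ y ∈ G.neighborSet x ∩ s, C y ≠ e) :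
    ∃ φ : V → {i // i ≠ d}, (s.Pairwise fun u v ↦ G.Adj u v → φ u ≠ φ v) ∧
      ∀ v, C v ≠ d → (φ v : α) = C v := by
  classical
  have h' : ∀ x, ∃ e : {i // i ≠ d}, x ∈ s → C x = d → ∀ y ∈ G.neighborSet x ∩ s, C y ≠ e := by
    intro x
    by_cases hx : x ∈ s ∧ C x = d
    · obtain ⟨e, hed, he⟩ := h x hx.1 hx.2
      exact ⟨⟨e, hed⟩, fun _ _ ↦ he⟩
    · exact ⟨Classical.arbitrary _, fun hxs hxd ↦ (hx ⟨hxs, hxd⟩).elim⟩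
  choose e he using h'
  let φ : V → {i // i ≠ d} := fun v ↦ if hv : C v ≠ d then ⟨C v, hv⟩ else e v
  have hφ : ∀ v, C v ≠ d → (φ v : α) = C v := fun v hv ↦ by simp only [φ, dif_pos hv]
  have hφd : ∀ v, C v = d → φ v = e v := fun v hv ↦ dif_neg (not_not.2 hv)
  have hne : ∀ {u v}, u ∈ s → v ∈ s → G.Adj u v → C v ≠ d → φ u ≠ φ v := by
    intro u v hu hv huv hvd heq
    have hval := congrArg Subtype.val heq
    rw [hφ v hvd] at hval
    by_cases hud : C u = d
    · rw [hφd u hud] at hval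
      exact he u hu hud v ⟨huv, hv⟩ hval.symm
    · exact C.valid huv ((hφ u hud).symm.trans hval)
  refine ⟨φ, fun u hu v hv _ huv ↦ ?_, hφ⟩
  by_cases hvd : C v = d
  · have hud : C u ≠ d := fun hud ↦ C.valid huv (hud.trans hvd.symm)
    exact (hne hv hu huv.symm hud).symm
  · exact hne hu hv huv hvd

theorem exists_isBSystem_of_forall_exists_missing (hα : ENat.card {i // i ≠ d} = m + 1)
    (hb : IsBSystem C b)
    (hD : ∀ v, (G.neighborSet v ∩ highDegree G m).encard < m)
    (h : ∀ x ∈ precoloredVertices C b d m, C x = d →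
      ∃ e ≠ d, ∀ y ∈ G.neighborSet x ∩ precoloredVertices C b d m, C y ≠ e) :
    ∃ (C' : G.Coloring {i // i ≠ d}) (b' : {i // i ≠ d} → V), IsBSystem C' b' := by
  have : Nonempty {i // i ≠ d} := by
    rw [← not_isEmpty_iff, ← ENat.card_eq_zero_iff_empty, hα]
    simp
  obtain ⟨φ, hφ, hφC⟩ := exists_pairwise_ne_of_forall_exists_missing C d h
  obtain ⟨C', hC'⟩ := exists_coloring_eqOn_of_few_highDegree hα hD hφ fun v hv ↦ by
    have hdiff : precoloredVertices C b d m \ highDegree G m ⊆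
        protectedVertices C b d \ highDegree G m :=
      fun w hw ↦ ⟨hw.1.resolve_right fun hw' ↦ hw.2 hw'.1, hw.2⟩
    have hfew := Set.not_nontrivial_iff.1 fun hv' ↦ hv.2 (.inr ⟨hv.1, hv'⟩)
    exact hfew.anti (Set.inter_subset_inter_right _ hdiff)
  exact ⟨C', _, hb.of_eqOn_protectedVertices C' fun v hv ↦
    (congrArg Subtype.val (hC' (.inl hv))).trans (hφC v hv.1)⟩

end DeleteColor

section Hub

/- Sending each `y ∈ s` to some `i` with `R y i`, preferably one with `S y i`, is injective and
hence bijective; so no `y ∈ s` is related to two indices, and `S` holds throughout. -/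
theorem exists_injective_of_card_le_encard [Finite ι] {s : Set V} (hs : ENat.card ι ≤ s.encard)
    {R S : V → ι → Prop} (hSR : ∀ y i, S y i → R y i)
    (hR : ∀ y ∈ s, ∀ z ∈ s, ∀ i, R y i → R z i → y = z)
    (h : ∀ y ∈ s, (∃ i, S y i) ∨ ∃ i j, i ≠ j ∧ R y i ∧ R y j) :
    ∃ p : ι → V, p.Injective ∧ ∀ i, p i ∈ s ∧ S (p i) i := by
  have hf : ∀ y : s, ∃ i, R y i ∧ (S y i ∨ ∃ j ≠ i, R y j) := by
    intro y
    rcases h y y.2 with ⟨i, hi⟩ | ⟨i, j, hij, hi, hj⟩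
    · exact ⟨i, hSR _ _ hi, .inl hi⟩
    · exact ⟨i, hi, .inr ⟨j, hij.symm, hj⟩⟩
  choose f hfR hfS using hf
  have hinj : f.Injective := fun y z hyz ↦
    Subtype.ext (hR y y.2 z z.2 (f y) (hfR y) (hyz ▸ hfR z))
  have : Finite s := .of_injective f hinj
  have hsurj : f.Surjective := (hinj.bijective_of_nat_card_le (by
    rw [← ENat.card_coe_set_eq, ENat.card_eq_coe_natCard, ENat.card_eq_coe_natCard] at hs
    exact_mod_cast hs)).2
  choose g hg using hsurj
  refine ⟨fun i ↦ g i, fun i j hij ↦ ?_, fun i ↦ ⟨(g i).2, ?_⟩⟩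
  · rw [← hg i, ← hg j, Subtype.ext hij]
  · rcases hfS (g i) with hS | ⟨j, hji, hj⟩
    · rwa [hg i] at hS
    · have hgij : g i = g j := Subtype.ext
        (hR _ (g i).2 _ (g j).2 j hj (by simpa only [hg j] using hfR (g j)))
      exact (hji (by rw [hgij, hg j])).elim

variable {C : G.Coloring α} {b : α → V} {d : α} {m : ℕ}

theorem exists_edist_le_one_of_mem_protectedVertices {x y : V} (hb : ∀ i, C (b i) = i)
    (hx : C x = d) (hy : y ∈ protectedVertices C b d) :
    ∃ i : {i // i ≠ d}, (G.deleteIncidenceSet x).edist y (b i) ≤ 1 := by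
  obtain ⟨hyd, i, hid, hyi⟩ := hy
  refine ⟨⟨i, hid⟩, edist_deleteIncidenceSet_le_one hyi ?_ ?_⟩
  · rintro rfl; exact hyd hx
  · rintro rfl; exact hid ((hb i).symm.trans hx)

theorem exists_adj_of_mem_protectedVertices_diff {p : V} (hbm : ∀ i, b i ∈ highDegree G m)
    (hp : p ∈ protectedVertices C b d \ highDegree G m) : ∃ i : {i // i ≠ d}, G.Adj p (b i) := by
  obtain ⟨⟨-, i, hid, hpi⟩, hpm⟩ := hp
  refine ⟨⟨i, hid⟩, (edist_le_one_iff_adj_or_eq.1 hpi).resolve_right ?_⟩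
  rintro rfl
  exact hpm (hbm i)

theorem exists_two_edist_le_two_of_nontrivial (hg : 7 ≤ G.egirth) {x y : V}
    (hb : ∀ i, C (b i) = i) (hbm : ∀ i, b i ∈ highDegree G m) (hx : C x = d)
    (hxm : x ∈ highDegree G m) (hxy : G.Adj x y) (hy : y ∉ protectedVertices C b d)
    (hy2 : (G.neighborSet y ∩ (protectedVertices C b d \ highDegree G m)).Nontrivial) :
    ∃ i j : {i // i ≠ d}, i ≠ j ∧ (G.deleteIncidenceSet x).edist y (b i) ≤ 2 ∧
      (G.deleteIncidenceSet x).edist y (b j) ≤ 2 := by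
  obtain ⟨p, ⟨hyp, hp⟩, q, ⟨hyq, hq⟩, hpq⟩ := hy2
  obtain ⟨i, hpi⟩ := exists_adj_of_mem_protectedVertices_diff hbm hp
  obtain ⟨j, hqj⟩ := exists_adj_of_mem_protectedVertices_diff hbm hq
  have hyb : ∀ i : {i // i ≠ d}, b i ≠ y := by
    rintro i rfl
    exact hy ⟨(hb i).trans_ne i.2, i, i.2, by simp only [edist_self, zero_le]⟩
  have hpath : ∀ {r} {i : {i // i ≠ d}}, G.Adj y r → r ∉ highDegree G m → G.Adj r (b i) →
      (G.deleteIncidenceSet x).edist y (b i) ≤ 2 := by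
    intro r i hyr hr hri
    have hxr : r ≠ x := by rintro rfl; exact hr hxm
    have hxb : b i ≠ x := by rintro h; exact i.2 (((hb i).symm.trans (congrArg C h)).trans hx)
    have h₁ := edist_deleteIncidenceSet_le_one (edist_le_one_iff_adj_or_eq.2 (.inl hyr))
      hxy.ne' hxr
    have h₂ := edist_deleteIncidenceSet_le_one (edist_le_one_iff_adj_or_eq.2 (.inl hri)) hxr hxb
    exact SimpleGraph.edist_triangle.trans ((add_le_add h₁ h₂).trans_eq one_add_one_eq_two)
  refine ⟨i, j, ?_, hpath hyp hp.2 hpi, hpath hyq hq.2 hqj⟩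
  rintro rfl
  refine hpq (eq_of_adj_of_edist_deleteIncidenceSet_le_four hg hyp hyq ?_)
  have h₁ := edist_deleteIncidenceSet_le_one (edist_le_one_iff_adj_or_eq.2 (.inl hpi))
    hyp.ne' (hyb i)
  have h₂ := edist_deleteIncidenceSet_le_one (edist_le_one_iff_adj_or_eq.2 (.inl hqj.symm))
    (hyb i) hyq.ne'
  exact SimpleGraph.edist_triangle.trans ((add_le_add h₁ h₂).trans (by decide))

theorem isHub_of_card_le_encard (hg : 7 ≤ G.egirth) [Finite α] {x : V} (hb : ∀ i, C (b i) = i)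
    (hbm : ∀ i, b i ∈ highDegree G m) (hx : C x = d) (hxm : x ∈ highDegree G m)
    (hcard : ENat.card {i // i ≠ d} ≤
      (G.neighborSet x ∩ precoloredVertices C b d m).encard) :
    IsHub G (fun i : {i // i ≠ d} ↦ b i) x := by
  obtain ⟨p, hp, hpS⟩ := exists_injective_of_card_le_encard hcard
    (R := fun y i ↦ (G.deleteIncidenceSet x).edist y (b i) ≤ 2)
    (S := fun y i ↦ (G.deleteIncidenceSet x).edist y (b i) ≤ 1)
    (fun y i h ↦ h.trans (by decide))
    (fun y hy z hz i hyi hzi ↦ by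
      refine eq_of_adj_of_edist_deleteIncidenceSet_le_four hg hy.1 hz.1 ?_
      rw [edist_comm] at hzi
      exact SimpleGraph.edist_triangle.trans (add_le_add hyi hzi))
    (fun y hy ↦ by
      by_cases hyF : y ∈ protectedVertices C b d
      · exact .inl (exists_edist_le_one_of_mem_protectedVertices hb hx hyF)
      · exact .inr (exists_two_edist_le_two_of_nontrivial hg hb hbm hx hxm hy.1 hyF
          (hy.2.resolve_left hyF).2))
  exact ⟨p, hp, fun i ↦ ⟨(hpS i).1.1, (edist_anti (G.deleteIncidenceSet_le x)).trans (hpS i).2⟩⟩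

/- With `p` and `q` the neighbors of the two hubs, `x' - q d - x - p i - b i - q i - x'` is a closed
walk of length at most six, for any third color `i` with `p i ≠ x'`. -/
theorem not_isHub_update [DecidableEq α] (hg : 7 ≤ G.egirth) (hα : Nat.card α = m + 2)
    (hm : 2 ≤ m) {d' : α} (hd : d ≠ d') {x x' : V} (hxx' : x ≠ x') (hb : ∀ i ≠ d', b i ≠ x')
    (hx : IsHub G (fun i : {i // i ≠ d} ↦ b i) x) :
    ¬ IsHub G (fun i : {i // i ≠ d'} ↦ Function.update b d x i) x' := by
  rintro ⟨q, hq, hqb⟩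
  obtain ⟨p, hp, hpb⟩ := hx
  have htwo : ({⟨d', hd.symm⟩}ᶜ : Set {i // i ≠ d}).Nontrivial := by
    rw [← Set.one_lt_encard_iff_nontrivial,
      encard_compl_singleton (card_subtype_ne (n := m + 1) hα d)]
    exact_mod_cast hm
  obtain ⟨-, ⟨⟨i, hid⟩, hi, rfl⟩, hpi⟩ := (htwo.image hp).exists_ne x'
  have hid' : i ≠ d' := fun h ↦ hi (Subtype.ext h)
  obtain ⟨hq₀, hq₀x⟩ := hqb ⟨d, hd⟩
  obtain ⟨hqi, hqib⟩ := hqb ⟨i, hid'⟩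
  obtain ⟨hxp, hpib⟩ := hpb ⟨i, hid⟩
  simp only [Function.update_self] at hq₀x
  simp only [Function.update_of_ne hid] at hqib
  refine hid.symm (congrArg Subtype.val (hq (eq_of_adj_of_edist_deleteIncidenceSet_le_four hg
    hq₀ hqi ?_)))
  set H := G.deleteIncidenceSet x'
  calc H.edist (q ⟨d, hd⟩) (q ⟨i, hid'⟩)
      ≤ H.edist (q ⟨d, hd⟩) (b i) + H.edist (b i) (q ⟨i, hid'⟩) := SimpleGraph.edist_triangle
    _ ≤ H.edist (q ⟨d, hd⟩) (p ⟨i, hid⟩) + H.edist (p ⟨i, hid⟩) (b i) +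
        H.edist (b i) (q ⟨i, hid'⟩) := by gcongr; exact SimpleGraph.edist_triangle
    _ ≤ H.edist (q ⟨d, hd⟩) x + H.edist x (p ⟨i, hid⟩) + H.edist (p ⟨i, hid⟩) (b i) +
        H.edist (b i) (q ⟨i, hid'⟩) := by gcongr; exact SimpleGraph.edist_triangle
    _ ≤ 1 + 1 + 1 + 1 := by
      gcongr
      · exact edist_deleteIncidenceSet_le_one hq₀x hq₀.ne' hxx'
      · exact edist_deleteIncidenceSet_le_one (edist_le_one_iff_adj_or_eq.2 (.inl hxp)) hxx' hpi
      · exact edist_deleteIncidenceSet_le_one hpib hpi (hb i hid')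
      · rw [edist_comm]
        exact edist_deleteIncidenceSet_le_one hqib hqi.ne' (hb i hid')
    _ = 4 := by norm_num

end Hub

section Main

variable {C : G.Coloring α} {b : α → V} {m : ℕ}

theorem exists_isHub_or_exists_isBSystem (hg : 7 ≤ G.egirth) (hα : Nat.card α = m + 2)
    (hD : ∀ v, (G.neighborSet v ∩ highDegree G m).encard < m) (hb : IsBSystem C b) (d : α) :
    (∃ x, C x = d ∧ IsBVertexOf C x ∧ IsHub G (fun i : {i // i ≠ d} ↦ b i) x) ∨
      ∃ (C' : G.Coloring {i // i ≠ d}) (b' : {i // i ≠ d} → V), IsBSystem C' b' := by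
  have : Finite α := Nat.finite_of_card_ne_zero (by lia)
  have hbm : ∀ {u}, IsBVertexOf C u → u ∈ highDegree G m :=
    fun hu ↦ highDegree_antitone G m.le_succ (hu.mem_highDegree hα)
  have hcard : ENat.card {i // i ≠ d} = m + 1 := by
    rw [ENat.card_eq_coe_natCard, card_subtype_ne hα d, Nat.cast_add_one]
  by_cases hx : ∃ x, C x = d ∧ IsBVertexOf C x ∧
      ENat.card {i // i ≠ d} ≤ (G.neighborSet x ∩ precoloredVertices C b d m).encard
  · obtain ⟨x, hxd, hxb, hxcard⟩ := hx
    exact .inl ⟨x, hxd, hxb, isHub_of_card_le_encard hg (fun i ↦ (hb i).1)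
      (fun i ↦ hbm (hb i).2) hxd (hbm hxb) hxcard⟩
  · refine .inr (exists_isBSystem_of_forall_exists_missing hcard hb hD fun x _ hxd ↦ ?_)
    by_cases hxb : IsBVertexOf C x
    · refine exists_mem_forall_ne_of_encard_lt C (t := {d}ᶜ)
        (not_le.1 fun hle ↦ hx ⟨x, hxd, hxb, ?_⟩)
      exact (ENat.card_coe_set_eq ({d}ᶜ : Set α)).trans_le hle
    · simp only [IsBVertexOf, hxd, not_forall, not_exists, not_and] at hxb
      obtain ⟨e, hed, he⟩ := hxb
      exact ⟨e, hed, fun y hy ↦ he y hy.1⟩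

theorem IsBVertexOf.two_le (hα : Nat.card α = m + 2)
    (hD : ∀ v, (G.neighborSet v ∩ highDegree G m).encard < m) {u : V} (hu : IsBVertexOf C u) :
    2 ≤ m := by
  have : Finite α := Nat.finite_of_card_ne_zero (by lia)
  have : Nontrivial α := Finite.one_lt_card_iff_nontrivial.1 (by lia)
  obtain ⟨j, hj⟩ := exists_ne (C u)
  obtain ⟨w, hw, -⟩ := hu j hj
  have humem : u ∈ G.neighborSet w ∩ highDegree G m :=
    ⟨hw.symm, highDegree_antitone G m.le_succ (hu.mem_highDegree hα)⟩
  have hone : (1 : ℕ∞) ≤ (G.neighborSet w ∩ highDegree G m).encard :=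
    Set.one_le_encard_iff_nonempty.2 ⟨u, humem⟩
  exact_mod_cast hone.trans_lt (hD w)

theorem IsBSystem.exists_isBColoring_pred (hg : 7 ≤ G.egirth)
    (hα : Nat.card α = m + 2) (hD : ∀ v, (G.neighborSet v ∩ highDegree G m).encard < m)
    (hb : IsBSystem C b) : ∃ c, IsBColoring G (m + 1) c := by
  classical
  have : Finite α := Nat.finite_of_card_ne_zero (by lia)
  have : Nontrivial α := Finite.one_lt_card_iff_nontrivial.1 (by lia)
  obtain ⟨d, d', hd⟩ := exists_pair_ne α
  have hm : 2 ≤ m := (hb d).2.two_le hα hD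
  rcases exists_isHub_or_exists_isBSystem hg hα hD hb d with ⟨x, rfl, hxb, hx⟩ | ⟨C', b', hb'⟩
  · rcases exists_isHub_or_exists_isBSystem hg hα hD (hb.update hxb) d' with
      ⟨x', rfl, -, hx'⟩ | ⟨C', b', hb'⟩
    · refine (not_isHub_update hg hα hm hd (fun h ↦ hd (congrArg C h)) (fun i hi h ↦ ?_) hx
        hx').elim
      exact hi ((hb i).1.symm.trans (congrArg C h))
    · exact card_subtype_ne hα d' ▸ hb'.exists_isBColoring
  · exact card_subtype_ne hα d ▸ hb'.exists_isBColoring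

/-- The notion of `k`-iris for graphs that need not be finite, where an infinite degree counts
as `⊤`. As in `IsIris`, the subtraction `k - 1` is truncated. -/
def IsEIris (G : SimpleGraph V) (k : ℕ) (u : V) : Prop :=
  (k - 1 : ℕ) ≤ (G.neighborSet u ∩ highDegree G (k - 1)).encard

theorem isEIris_iff_isIris [Fintype V] [DecidableRel G.Adj] {k : ℕ} {u : V} :
    IsEIris G k u ↔ IsIris G k u := by
  classical
  have hdegree : ∀ v, v ∈ highDegree G (k - 1) ↔ k - 1 ≤ G.degree v := by
    intro v
    rw [highDegree, Set.mem_ofPred_eq, Set.encard_eq_coe_toFinset_card, Nat.cast_le,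
      Set.toFinset_card, card_neighborSet_eq_degree]
  constructor
  · intro h
    rw [IsEIris, Set.encard_eq_coe_toFinset_card, Nat.cast_le] at h
    exact ⟨_, fun v hv ↦ (Set.mem_toFinset.1 hv).1, h,
      fun v hv ↦ (hdegree v).1 (Set.mem_toFinset.1 hv).2⟩
  · rintro ⟨S, hadj, hcard, hdeg⟩
    have hS : ((k - 1 : ℕ) : ℕ∞) ≤ (S : Set V).encard := by
      rwa [Set.encard_coe_eq_coe_finsetCard, Nat.cast_le]
    exact hS.trans (Set.encard_le_encard fun v hv ↦ ⟨hadj v hv, (hdegree v).2 (hdeg v hv)⟩)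

theorem bColoring_pred_or_iris_general (hg : 7 ≤ G.egirth) {k : ℕ} {c : V → ℕ}
    (hb : IsBColoring G (k + 1) c) : (∃ c', IsBColoring G k c') ∨ ∃ u, IsEIris G k u := by
  obtain ⟨C, b, hCb⟩ := hb.exists_isBSystem
  by_contra! hno
  obtain ⟨hcolor, hiris⟩ := hno
  cases k with
  | zero => exact hiris (b 0) (by simp [IsEIris])
  | succ m =>
    obtain ⟨c', hc'⟩ := hCb.exists_isBColoring_pred hg (Nat.card_fin _) fun v ↦ not_le.1 (hiris v)
    exact hcolor c' hc'

end Main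

/-- If `G` has girth at least 7 and a b-coloring with `k ≥ χ(G) + 1` colors, then either `G`
has a b-coloring with `k - 1` colors, or `G` contains a `(k-1)`-iris. -/
theorem bColoring_pred_or_iris [Fintype V] (G : SimpleGraph V) [DecidableRel G.Adj]
    (hg : (7 : ℕ∞) ≤ G.egirth) (k : ℕ) (c : V → ℕ) (hb : IsBColoring G k c)
    (hk : G.chromaticNumber + 1 ≤ (k : ℕ∞)) :
    (∃ c' : V → ℕ, IsBColoring G (k - 1) c') ∨ ∃ u, IsIris G (k - 1) u := by
  obtain ⟨k, rfl⟩ := Nat.exists_eq_add_one_of_ne_zero (n := k) (by rintro rfl; simp at hk)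
  simpa only [Nat.add_sub_cancel, isEIris_iff_isIris] using bColoring_pred_or_iris_general hg hb
end
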